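/- Let m ≥ 0, fix t ∈ (0,1] and let s < 1/4. Then for every constant C > 0 and every ε > 0 there exists φ ∈ H^s(ℝ^3) with 0 < ‖φ‖_{H^s} ≤ ε such that ‖∫_0^t U(t−τ)[(|x|^{-1} ∗ |U(τ)φ|^2) U(τ)φ] dτ‖_{H^s(ℝ^3)} > C ‖φ‖_{H^s(ℝ^3)}^3. In particular, the cubic Duhamel estimate ‖∫_0^t U(t−τ)((|x|^{-1} ∗ |U(τ)φ|^2) U(τ)φ) dτ‖_{H^s} ≲ ‖φ‖_{H^s}^3 fails in any neighborhood of the origin. -/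

import Mathlib

open MeasureTheory Real Complex
open scoped FourierTransform ENNReal

noncomputable section

abbrev Rd : Type := EuclideanSpace ℝ (Fin 3)

/-- Sobolev `H^s` norm (as an extended real), defined on the Fourier side. -/
def HsNorm (s : ℝ) (f : Rd → ℂ) : ℝ≥0∞ :=
  (∫⁻ ξ : Rd, ENNReal.ofReal ((1 + ‖ξ‖ ^ 2) ^ s * ‖𝓕 f ξ‖ ^ 2)) ^ (1 / 2 : ℝ)

/-- Linear propagator `U(t)` of the boson star equation with mass `m`. -/
def uProp (m t : ℝ) (φ : Rd → ℂ) : Rd → ℂ :=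
  𝓕⁻ fun ξ => Complex.exp (Complex.I * t * ((m - Real.sqrt (m ^ 2 + ‖ξ‖ ^ 2) : ℝ) : ℂ)) * 𝓕 φ ξ

/-- Convolution with the Newtonian potential `|x|⁻¹`. -/
def newton (f : Rd → ℂ) (x : Rd) : ℂ := ∫ y : Rd, f y / (‖x - y‖ : ℂ)

/-- The Hartree nonlinearity `(|x|⁻¹ ∗ |φ|²) φ`. -/
def nonlin (φ : Rd → ℂ) (x : Rd) : ℂ := newton (fun y => (‖φ y‖ : ℂ) ^ 2) x * φ x

/-- The first Picard iterate `∫₀ᵗ U(t-τ)[(|x|⁻¹ ∗ |U(τ)φ|²) U(τ)φ] dτ`. -/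
def duhamelFree (m : ℝ) (φ : Rd → ℂ) (t : ℝ) : Rd → ℂ := fun x =>
  ∫ τ in (0 : ℝ)..t, uProp m (t - τ) (nonlin (uProp m τ φ)) x

/-!
Take the data to have as Fourier transform a smooth nonnegative bump `b` of height `a` on the ball
of radius `r` around a frequency `c` with `‖c‖ ~ r²`. There the phase
`√(m² + |ξ|²)` differs from a linear function by `O(r² / ‖c‖)`, and the interaction
`ξ = (ξ - ζ) + (ζ + α) - α` annihilates linear functions, so for bounded times no oscillation occurs
and the Duhamel term is, at frequencies near `c`, at least `t / 2` times the nonlinearity of the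
non-evolved bump, which is of size `a³ r⁴`: two integrations contribute `r⁶` and the Fourier
transform `(π ‖ζ‖²)⁻¹` of the Newtonian potential contributes `r⁻²`. In `H^s` this has size
`a³ r⁴ · ‖c‖ ^ s r ^ (3 / 2)`, against `(a ‖c‖ ^ s r ^ (3 / 2))³` for the cube of the norm of the
data. The ratio is `r / ‖c‖ ^ (2 * s) ~ r ^ (1 - 4 * s)`, which is unbounded for `s < 1 / 4`.
-/

open Set Filter Topology ContinuousLinearMap
open scoped Convolution ComplexConjugate ContDiff

section Integration

variable {X Y : Type*} [MeasurableSpace X] [MeasurableSpace Y] {μ : Measure X} {ν : Measure Y}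

lemma integral_le_re_mul_integral {f : X → ℂ} {h : X → ℝ} {θ : ℂ} (hf : Integrable f μ)
    (hh : Integrable h μ) (hle : ∀ᵐ x ∂μ, h x ≤ (θ * f x).re) :
    ∫ x, h x ∂μ ≤ (θ * ∫ x, f x ∂μ).re := by
  rw [← integral_const_mul]
  exact (integral_mono_ae hh (hf.const_mul θ).re hle).trans_eq (integral_re (hf.const_mul θ))

lemma mul_measureReal_le_integral {f : X → ℝ} {A : Set X} {k : ℝ} (hf : Integrable f μ)
    (h0 : ∀ x, 0 ≤ f x) (hA : MeasurableSet A) (hA' : μ A ≠ ⊤) (hk : ∀ x ∈ A, k ≤ f x) :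
    k * μ.real A ≤ ∫ x, f x ∂μ :=
  calc k * μ.real A ≤ ∫ x in A, f x ∂μ := setIntegral_ge_of_const_le_real hA hA' hk hf.integrableOn
    _ ≤ ∫ x, f x ∂μ := setIntegral_le_integral hf (Eventually.of_forall h0)

lemma integrable_uncurry_of_integral_norm_le [IsFiniteMeasure μ] [SFinite ν] {v : X → Y → ℂ}
    {C : ℝ} (hv : StronglyMeasurable (Function.uncurry v)) (hi : ∀ᵐ x ∂μ, Integrable (v x) ν)
    (hC : ∀ᵐ x ∂μ, ∫ y, ‖v x y‖ ∂ν ≤ C) : Integrable (Function.uncurry v) (μ.prod ν) := by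
  refine (integrable_prod_iff hv.aestronglyMeasurable).2 ⟨hi, (integrable_const C).mono' ?_ ?_⟩
  · exact hv.norm.integral_prod_right.aestronglyMeasurable
  · filter_upwards [hC] with x hx
    rwa [Real.norm_of_nonneg (integral_nonneg fun _ => norm_nonneg _)]

end Integration

section Fourier

variable {V : Type*} [NormedAddCommGroup V] [InnerProductSpace ℝ V] [MeasurableSpace V]
  [BorelSpace V] [FiniteDimensional ℝ V]

lemma norm_fourierInv_le_integral_norm (f : V → ℂ) (x : V) : ‖𝓕⁻ f x‖ ≤ ∫ ξ, ‖f ξ‖ := by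
  rw [Real.fourierInv_eq_fourier_neg]
  exact VectorFourier.norm_fourierIntegral_le_integral_norm _ _ _ _ _

lemma continuous_fourier_of_integrable {f : V → ℂ} (hf : Integrable f) : Continuous (𝓕 f) :=
  VectorFourier.fourierIntegral_continuous Real.continuous_fourierChar continuous_inner hf

lemma continuous_fourierInv_of_integrable {f : V → ℂ} (hf : Integrable f) : Continuous (𝓕⁻ f) :=
  VectorFourier.fourierIntegral_continuous Real.continuous_fourierChar continuous_inner.neg hf

lemma fourier_fourierInv_of_integrable {g : V → ℂ} (hg : Continuous g) (hi : Integrable g)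
    (hi' : Integrable (𝓕⁻ g)) : 𝓕 (𝓕⁻ g) = g := by
  refine hg.fourier_fourierInv_eq hi ?_
  simpa [Real.fourierInv_eq_fourier_neg] using hi'.comp_neg

lemma fourier_fourierChar_smul (f : V → ℂ) (w ξ : V) :
    𝓕 (fun y => 𝐞 (inner ℝ y w) • f y) ξ = 𝓕 f (ξ - w) := by
  simp only [Real.fourier_eq, smul_smul, ← AddChar.map_add_eq_mul, inner_sub_right, neg_sub',
    sub_neg_eq_add]

lemma conj_fourierInv (f : V → ℂ) (x : V) : conj (𝓕⁻ f x) = 𝓕 (fun ξ => conj (f ξ)) x := by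
  rw [Real.fourier_eq, Real.fourierInv_eq, ← integral_conj]
  simp [Circle.smul_def, AddChar.map_neg_eq_inv]

lemma integrable_fourierChar_smul {f : V → ℂ} (hf : Integrable f) (w : V) :
    Integrable (fun y => 𝐞 (inner ℝ y w) • f y) := by
  simpa using (Real.fourierIntegral_convergent_iff (μ := volume) (-w)).2 hf

lemma integral_fourier_mul {f g : V → ℂ} (hf : Integrable f) (hg : Integrable g) :
    ∫ ξ, 𝓕 f ξ * g ξ = ∫ x, f x * 𝓕 g x :=
  VectorFourier.integral_fourierIntegral_smul_eq_flip (L := innerₗ V)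
    Real.continuous_fourierChar continuous_inner hf hg |>.trans <| by
      simp only [flip_innerₗ, smul_eq_mul]; rfl

lemma fourierInv_mul_fourier {k n : V → ℂ} (hk : Integrable k) (hn : Integrable n) :
    𝓕⁻ (fun ξ => k ξ * 𝓕 n ξ) = n ⋆[mul ℂ ℂ] 𝓕⁻ k := by
  ext x
  calc 𝓕⁻ (fun ξ => k ξ * 𝓕 n ξ) x = ∫ ξ, (𝐞 (inner ℝ ξ x) • k ξ) * 𝓕 n ξ := by
        simp only [Real.fourierInv_eq, smul_mul_assoc]
    _ = ∫ y, 𝓕 (fun ξ => 𝐞 (inner ℝ ξ x) • k ξ) y * n y :=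
        (integral_fourier_mul (integrable_fourierChar_smul hk x) hn).symm
    _ = (n ⋆[mul ℂ ℂ] 𝓕⁻ k) x := by
        simp [convolution_def, fourier_fourierChar_smul, Real.fourierInv_eq_fourier_neg, mul_comm]

/-- The autocorrelation `ζ ↦ ∫ conj (g α) g(ζ + α) dα`: on the Fourier side, the density `|φ|²`. -/
def autocorrelation {𝕜 : Type*} [RCLike 𝕜] (g : V → 𝕜) (ζ : V) : 𝕜 :=
  ∫ α, conj (g α) * g (ζ + α)

lemma fourier_normSq_fourierInv {g : V → ℂ} (hg : Continuous g) (hi : Integrable g)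
    (hi' : Integrable (𝓕⁻ g)) (ζ : V) :
    𝓕 (fun y => (‖𝓕⁻ g y‖ : ℂ) ^ 2) ζ = autocorrelation g ζ := by
  have hconj : Integrable fun α => conj (g α) := Complex.conjLIE.integrable_comp_iff.2 hi
  calc 𝓕 (fun y => (‖𝓕⁻ g y‖ : ℂ) ^ 2) ζ
      = ∫ y, (𝐞 (inner ℝ y (-ζ)) • 𝓕⁻ g y) * 𝓕 (fun α => conj (g α)) y := by
        simp only [Real.fourier_eq _ ζ, ← conj_fourierInv, smul_mul_assoc, Complex.mul_conj',
          inner_neg_right]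
    _ = ∫ α, 𝓕 (fun y => 𝐞 (inner ℝ y (-ζ)) • 𝓕⁻ g y) α * conj (g α) :=
        (integral_fourier_mul (integrable_fourierChar_smul hi' _) hconj).symm
    _ = autocorrelation g ζ := by
        simp only [autocorrelation, fourier_fourierChar_smul,
          fourier_fourierInv_of_integrable hg hi hi', sub_neg_eq_add, add_comm ζ, mul_comm]

lemma integral_mul_fourierInv {f k : V → ℂ} (hf : Integrable f) (hk : Integrable k) :
    ∫ x, f x * 𝓕⁻ k x = ∫ ξ, 𝓕⁻ f ξ * k ξ := by
  calc ∫ x, f x * 𝓕⁻ k x = ∫ x, f x * 𝓕 (fun ξ => k (-ξ)) x := by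
        simp only [Real.fourierInv_eq_fourier_comp_neg]
    _ = ∫ ξ, 𝓕 f ξ * k (-ξ) := (integral_fourier_mul hf hk.comp_neg).symm
    _ = ∫ ξ, 𝓕⁻ f ξ * k ξ := by
        rw [← integral_neg_eq_self]
        simp only [neg_neg, Real.fourierInv_eq_fourier_neg]

lemma integral_prod_mul_fourierInv_sub {f h w : V → ℂ} (hf : Integrable f) (hh : Integrable h)
    (hw : Integrable w) :
    ∫ q : V × V, f q.1 * h q.2 * 𝓕⁻ w (q.1 - q.2) = ∫ ζ, 𝓕⁻ f ζ * 𝓕 h ζ * w ζ := by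
  have hkernel : Continuous fun q : V × V => 𝓕⁻ w (q.1 - q.2) :=
    (continuous_fourierInv_of_integrable hw).comp continuous_sub
  have hint : Integrable fun q : V × V => f q.1 * h q.2 * 𝓕⁻ w (q.1 - q.2) :=
    (hf.mul_prod hh).mul_bdd hkernel.aestronglyMeasurable
      (Eventually.of_forall fun q => norm_fourierInv_le_integral_norm w _)
  have hwh : Integrable fun ζ => w ζ * 𝓕 h ζ :=
    hw.mul_bdd (continuous_fourier_of_integrable hh).aestronglyMeasurable
      (Eventually.of_forall fun ζ => VectorFourier.norm_fourierIntegral_le_integral_norm _ _ _ _ _)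
  calc ∫ q : V × V, f q.1 * h q.2 * 𝓕⁻ w (q.1 - q.2)
      = ∫ x, f x * (h ⋆[mul ℂ ℂ] 𝓕⁻ w) x := by
        rw [Measure.volume_eq_prod, integral_prod _ hint]
        simp only [mul_assoc, integral_const_mul, convolution_def, mul_apply']
    _ = ∫ x, f x * 𝓕⁻ (fun ζ => w ζ * 𝓕 h ζ) x := by rw [fourierInv_mul_fourier hw hh]
    _ = ∫ ζ, 𝓕⁻ f ζ * 𝓕 h ζ * w ζ := by
        rw [integral_mul_fourierInv hf hwh]
        simp only [mul_assoc, mul_comm (w _)]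

lemma integrable_fourierChar_smul_uncurry {X : Type*} [MeasurableSpace X] {μ : Measure X}
    [SFinite μ] {v : X → V → ℂ} (hv : Integrable (Function.uncurry v) (μ.prod volume)) (ξ : V) :
    Integrable (fun q : X × V => 𝐞 (-inner ℝ q.2 ξ) • v q.1 q.2) (μ.prod volume) := by
  refine hv.mono ?_ (Eventually.of_forall fun q => by simp [Circle.norm_smul, Function.uncurry])
  have : Continuous fun y : V => (𝐞 (-inner ℝ y ξ) : ℂ) := by fun_prop
  exact (this.measurable.comp measurable_snd).aestronglyMeasurable.mul hv.aestronglyMeasurable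

lemma integrable_fourier_of_uncurry {X : Type*} [MeasurableSpace X] {μ : Measure X} [SFinite μ]
    {v : X → V → ℂ} (hv : Integrable (Function.uncurry v) (μ.prod volume)) (ξ : V) :
    Integrable (fun τ => 𝓕 (v τ) ξ) μ :=
  (integrable_fourierChar_smul_uncurry hv ξ).integral_prod_left

lemma fourier_integral {X : Type*} [MeasurableSpace X] {μ : Measure X} [SFinite μ] {v : X → V → ℂ}
    (hv : Integrable (Function.uncurry v) (μ.prod volume)) (ξ : V) :
    𝓕 (fun x => ∫ τ, v τ x ∂μ) ξ = ∫ τ, 𝓕 (v τ) ξ ∂μ := by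
  simp only [Real.fourier_eq, Circle.smul_def, smul_eq_mul, ← integral_const_mul]
  exact (integral_integral_swap (f := fun τ x => (𝐞 (-inner ℝ x ξ) : ℂ) * v τ x)
    (integrable_fourierChar_smul_uncurry hv ξ)).symm

end Fourier

section UniformDecay

variable {V : Type*} [NormedAddCommGroup V] [InnerProductSpace ℝ V]

lemma norm_iteratedFDeriv_prodMk_le {𝕜 E F G : Type*} [NontriviallyNormedField 𝕜]
    [NormedAddCommGroup E] [NormedSpace 𝕜 E] [NormedAddCommGroup F] [NormedSpace 𝕜 F]
    [NormedAddCommGroup G] [NormedSpace 𝕜 G] {f : E × F → G} {n : ℕ} (hf : ContDiff 𝕜 n f)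
    (x : E) (y : F) :
    ‖iteratedFDeriv 𝕜 n (fun y => f (x, y)) y‖ ≤ ‖iteratedFDeriv 𝕜 n f (x, y)‖ := by
  have hslice : (fun y => f (x, y)) = (fun q => f ((x, 0) + q)) ∘ inr 𝕜 E F := by ext; simp
  have hf' : ContDiff 𝕜 n fun q => f ((x, 0) + q) := hf.comp (contDiff_const.add contDiff_id)
  rw [hslice, iteratedFDeriv_comp_right _ hf' _ le_rfl, iteratedFDeriv_comp_add_left]
  calc _ ≤ ‖iteratedFDeriv 𝕜 n f ((x, 0) + inr 𝕜 E F y)‖ * ∏ _i : Fin n, ‖inr 𝕜 E F‖ :=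
        ContinuousMultilinearMap.norm_compContinuousLinearMap_le _ _
    _ ≤ ‖iteratedFDeriv 𝕜 n f ((x, 0) + inr 𝕜 E F y)‖ * 1 := by
        gcongr
        exact Finset.prod_le_one (fun _ _ => norm_nonneg _) fun _ _ => norm_inr_le_one 𝕜 E F
    _ = ‖iteratedFDeriv 𝕜 n f (x, y)‖ := by simp

variable [MeasurableSpace V] [BorelSpace V] [FiniteDimensional ℝ V]

lemma pow_mul_norm_fourierInv_le {f : V → ℂ} {n : ℕ} (hf : ContDiff ℝ n f)
    (hc : HasCompactSupport f) (x : V) :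
    ‖x‖ ^ n * ‖𝓕⁻ f x‖ ≤ 2 ^ n * ∑ j ∈ Finset.range (n + 1), ∫ ξ, ‖iteratedFDeriv ℝ j f ξ‖ := by
  have hint (k j : ℕ) (hj : (j : ℕ∞) ≤ n) :
      Integrable fun ξ => ‖ξ‖ ^ k * ‖iteratedFDeriv ℝ j f ξ‖ :=
    ((continuous_norm.pow k).mul (hf.continuous_iteratedFDeriv (by exact_mod_cast hj)).norm)
      |>.integrable_of_hasCompactSupport (hc.iteratedFDeriv j).norm.mul_left
  have h := Real.pow_mul_norm_iteratedFDeriv_fourier_le (K := 0) (N := n) (by exact_mod_cast hf)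
    (fun k j _ => hint k j) (k := 0) (n := n) le_rfl le_rfl (-x)
  simpa [Real.fourierInv_eq_fourier_neg, Finset.sum_product] using h

lemma norm_fourierInv_le_mul_rpow {f : V → ℂ} {n : ℕ} (hf : ContDiff ℝ n f)
    (hc : HasCompactSupport f) (x : V) :
    ‖𝓕⁻ f x‖ ≤ 2 ^ n * (1 + 2 ^ n) * (∑ j ∈ Finset.range (n + 1), ∫ ξ, ‖iteratedFDeriv ℝ j f ξ‖) *
      (1 + ‖x‖) ^ (-n : ℝ) := by
  set S := ∑ j ∈ Finset.range (n + 1), ∫ ξ, ‖iteratedFDeriv ℝ j f ξ‖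
  have hS : ‖𝓕⁻ f x‖ ≤ S := by
    refine (norm_fourierInv_le_integral_norm f x).trans ?_
    simpa only [norm_iteratedFDeriv_zero] using Finset.single_le_sum
      (f := fun j => ∫ ξ, ‖iteratedFDeriv ℝ j f ξ‖)
      (fun j _ => integral_nonneg fun ξ => norm_nonneg _) (Finset.mem_range.2 n.succ_pos)
  rw [rpow_neg (by positivity), rpow_natCast, ← div_eq_mul_inv, le_div_iff₀ (by positivity)]
  calc ‖𝓕⁻ f x‖ * (1 + ‖x‖) ^ n
      ≤ ‖𝓕⁻ f x‖ * (2 ^ (n - 1) * (1 ^ n + ‖x‖ ^ n)) := by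
        gcongr; exact add_pow_le zero_le_one (norm_nonneg x) n
    _ ≤ ‖𝓕⁻ f x‖ * (2 ^ n * (1 + ‖x‖ ^ n)) := by
        gcongr
        exacts [one_le_two, n.sub_le 1, (one_pow n).le]
    _ = 2 ^ n * (‖𝓕⁻ f x‖ + ‖x‖ ^ n * ‖𝓕⁻ f x‖) := by ring
    _ ≤ 2 ^ n * (S + 2 ^ n * S) :=
        mul_le_mul_of_nonneg_left (add_le_add hS (pow_mul_norm_fourierInv_le hf hc x))
          (by positivity)
    _ = 2 ^ n * (1 + 2 ^ n) * S := by ring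

lemma exists_integral_norm_fourierInv_le {ι : Type*} {S : Set ι} {f : ι → V → ℂ} {K : Set V}
    (hK : IsCompact K) (hf : ∀ i ∈ S, ContDiff ℝ ∞ (f i)) (hfK : ∀ i ∈ S, tsupport (f i) ⊆ K)
    (hbdd : ∀ j : ℕ, ∃ M : ℝ, ∀ i ∈ S, ∀ ξ ∈ K, ‖iteratedFDeriv ℝ j (f i) ξ‖ ≤ M) :
    ∃ C : ℝ, ∀ i ∈ S, Integrable (𝓕⁻ (f i)) ∧ ∫ x, ‖𝓕⁻ (f i) x‖ ≤ C := by
  choose M hM using hbdd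
  have hderiv (j : ℕ) (i : ι) (hi : i ∈ S) :
      ∫ ξ, ‖iteratedFDeriv ℝ j (f i) ξ‖ ≤ M j * volume.real K := by
    rw [← setIntegral_eq_integral_of_forall_compl_eq_zero (s := K) fun ξ hξ => ?_]
    · refine (Real.le_norm_self _).trans (norm_setIntegral_le_of_norm_le_const hK.measure_lt_top
        fun ξ hξ => ?_)
      simpa using hM j i hi ξ hξ
    · exact norm_eq_zero.2 <| Function.notMem_support.1 fun h =>
        hξ (hfK i hi (support_iteratedFDeriv_subset j h))
  set n : ℕ := Module.finrank ℝ V + 1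
  set D : ℝ := 2 ^ n * (1 + 2 ^ n) * ∑ j ∈ Finset.range (n + 1), M j * volume.real K
  have hdecay (i : ι) (hi : i ∈ S) (x : V) : ‖𝓕⁻ (f i) x‖ ≤ D * (1 + ‖x‖) ^ (-n : ℝ) := by
    have hc : HasCompactSupport (f i) := hK.of_isClosed_subset (isClosed_tsupport _) (hfK i hi)
    have hn : ContDiff ℝ n (f i) := (hf i hi).of_le (by exact_mod_cast le_top)
    refine (norm_fourierInv_le_mul_rpow hn hc x).trans ?_
    exact mul_le_mul_of_nonneg_right (mul_le_mul_of_nonneg_left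
      (Finset.sum_le_sum fun j _ => hderiv j i hi) (by positivity)) (by positivity)
  have hweight : Integrable fun x : V => (1 + ‖x‖) ^ (-n : ℝ) :=
    integrable_one_add_norm (by simp [n])
  refine ⟨∫ x : V, D * (1 + ‖x‖) ^ (-n : ℝ), fun i hi => ?_⟩
  have hint : Integrable (𝓕⁻ (f i)) := by
    refine (hweight.const_mul D).mono' ?_ (Eventually.of_forall (hdecay i hi))
    have hcompact : HasCompactSupport (f i) :=
      hK.of_isClosed_subset (isClosed_tsupport _) (hfK i hi)
    exact (continuous_fourierInv_of_integrable
      ((hf i hi).continuous.integrable_of_hasCompactSupport hcompact)).aestronglyMeasurable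
  exact ⟨hint, integral_mono hint.norm (hweight.const_mul D) (hdecay i hi)⟩

end UniformDecay

section Propagator

variable {V : Type*} [NormedAddCommGroup V]

/-- The phase `φ_m(ξ) = m - √(m² + |ξ|²)` of the linear propagator, on an arbitrary normed
space. -/
def phase (m : ℝ) (ξ : V) : ℝ := m - √(m ^ 2 + ‖ξ‖ ^ 2)

/-- The Fourier multiplier `exp(i σ φ_m(ξ))` of the linear propagator `U(σ)`. -/
def symbol (m σ : ℝ) (ξ : V) : ℂ := cexp (I * σ * (phase m ξ : ℝ))

lemma symbol_eq_exp_mul_I (m σ : ℝ) (ξ : V) : symbol m σ ξ = cexp ((σ * phase m ξ : ℝ) * I) := by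
  simp only [symbol, ofReal_mul, mul_comm I, mul_right_comm]

lemma norm_symbol (m σ : ℝ) (ξ : V) : ‖symbol m σ ξ‖ = 1 := by
  rw [symbol_eq_exp_mul_I, Complex.norm_exp_ofReal_mul_I]

lemma symbol_add (m σ σ' : ℝ) (ξ : V) : symbol m (σ + σ') ξ = symbol m σ ξ * symbol m σ' ξ := by
  simp only [symbol_eq_exp_mul_I, ← Complex.exp_add, ← add_mul, ← ofReal_add]

lemma continuous_uncurry_symbol (m : ℝ) : Continuous fun q : ℝ × V => symbol m q.1 q.2 := by
  unfold symbol phase; fun_prop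

/-- The frequency profile at time `σ` of the linear evolution with initial profile `b`. -/
def evolve (m σ : ℝ) (b : V → ℂ) (ξ : V) : ℂ := symbol m σ ξ * b ξ

lemma norm_evolve (m σ : ℝ) (b : V → ℂ) (ξ : V) : ‖evolve m σ b ξ‖ = ‖b ξ‖ := by
  rw [evolve, norm_mul, norm_symbol, one_mul]

lemma continuous_evolve (m σ : ℝ) {b : V → ℂ} (hb : Continuous b) :
    Continuous (evolve m σ b) :=
  ((continuous_uncurry_symbol m).comp (Continuous.prodMk_right σ)).mul hb

lemma uProp_eq_fourierInv (m τ : ℝ) (φ : Rd → ℂ) : uProp m τ φ = 𝓕⁻ (evolve m τ (𝓕 φ)) := rfl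

variable [InnerProductSpace ℝ V]

lemma contDiffAt_uncurry_symbol (m σ : ℝ) {ξ : V} (hξ : ξ ≠ 0) :
    ContDiffAt ℝ ∞ (fun q : ℝ × V => symbol m q.1 q.2) (σ, ξ) := by
  have hpos : m ^ 2 + ‖ξ‖ ^ 2 ≠ 0 := by
    have : 0 < ‖ξ‖ := norm_pos_iff.2 hξ
    positivity
  have hphase : ContDiffAt ℝ ∞ (fun q : ℝ × V => phase m q.2) (σ, ξ) :=
    contDiffAt_const.sub ((contDiffAt_const.add (contDiffAt_snd.norm_sq ℝ)).sqrt hpos)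
  have hexp : ContDiffAt ℝ ∞ (fun q : ℝ × V => cexp ((q.1 * phase m q.2 : ℝ) * I)) (σ, ξ) :=
    ((Complex.ofRealCLM.contDiff.contDiffAt.comp _ (contDiffAt_fst.mul hphase)).mul
      contDiffAt_const).cexp
  simpa only [symbol_eq_exp_mul_I] using hexp

/-- Smooth compactly supported functions vanishing near the origin, where `phase 0` is singular. -/
structure IsTestFunctionOffZero (b : V → ℂ) : Prop where
  contDiff : ContDiff ℝ ∞ b
  hasCompactSupport : HasCompactSupport b
  zero_notMem_tsupport : (0 : V) ∉ tsupport b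

namespace IsTestFunctionOffZero

variable {b : V → ℂ}

lemma contDiff_uncurry_evolve (hb : IsTestFunctionOffZero b) (m : ℝ) :
    ContDiff ℝ ∞ fun q : ℝ × V => evolve m q.1 b q.2 := by
  rw [contDiff_iff_contDiffAt]
  rintro ⟨σ, ξ⟩
  by_cases hξ : ξ = 0
  · have hb0 : b =ᶠ[𝓝 ξ] 0 := notMem_tsupport_iff_eventuallyEq.1 (hξ ▸ hb.zero_notMem_tsupport)
    refine (contDiffAt_const (c := 0)).congr_of_eventuallyEq ?_
    filter_upwards [continuousAt_snd.eventually hb0] with q hq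
    simp [evolve, hq]
  · have hb' : ContDiffAt ℝ ∞ (fun q : ℝ × V => b q.2) (σ, ξ) := hb.contDiff.contDiffAt.snd'
    exact (contDiffAt_uncurry_symbol m σ hξ).mul hb'

variable [MeasurableSpace V] [BorelSpace V] [FiniteDimensional ℝ V]

lemma integrable_evolve (hb : IsTestFunctionOffZero b) (m σ : ℝ) :
    Integrable (evolve m σ b) :=
  (continuous_evolve m σ hb.contDiff.continuous).integrable_of_hasCompactSupport
    hb.hasCompactSupport.mul_left

lemma exists_integral_norm_fourierInv_le (hb : IsTestFunctionOffZero b) (m T : ℝ) :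
    ∃ C : ℝ, ∀ σ ∈ Icc 0 T,
      Integrable (𝓕⁻ (evolve m σ b)) ∧ ∫ x, ‖𝓕⁻ (evolve m σ b) x‖ ≤ C := by
  have hsmooth := hb.contDiff_uncurry_evolve m
  have hslice (σ : ℝ) : ContDiff ℝ ∞ (evolve m σ b) := hsmooth.comp (contDiff_prodMk_right σ)
  have hsupp (σ : ℝ) : tsupport (evolve m σ b) ⊆ tsupport b := tsupport_mul_subset_right
  refine _root_.exists_integral_norm_fourierInv_le hb.hasCompactSupport (fun σ _ => hslice σ)
    (fun σ _ => hsupp σ) fun j => ?_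
  have hj : (j : ℕ∞ω) ≤ (∞ : ℕ∞ω) := by exact_mod_cast le_top
  obtain ⟨M, hM⟩ := (isCompact_Icc.prod hb.hasCompactSupport).exists_bound_of_continuousOn
    (hsmooth.continuous_iteratedFDeriv hj).continuousOn
  exact ⟨M, fun σ hσ ξ hξ =>
    (norm_iteratedFDeriv_prodMk_le (hsmooth.of_le hj) σ ξ).trans (hM (σ, ξ) ⟨hσ, hξ⟩)⟩

lemma continuous_uncurry_fourierInv (hb : IsTestFunctionOffZero b) (m : ℝ) :
    Continuous fun q : ℝ × V => 𝓕⁻ (evolve m q.1 b) q.2 := by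
  have hsymbol := continuous_uncurry_symbol (V := V) m
  have hb' := hb.contDiff.continuous
  simp only [Real.fourierInv_eq, Circle.smul_def, smul_eq_mul, evolve]
  refine continuous_of_dominated (bound := fun ξ => ‖b ξ‖) (fun q => ?_) (fun q => ?_)
    (hb'.integrable_of_hasCompactSupport hb.hasCompactSupport).norm
    (Eventually.of_forall fun ξ => ?_)
  · have := hsymbol.comp (Continuous.prodMk_right q.1)
    exact Continuous.aestronglyMeasurable (by fun_prop)
  · exact Eventually.of_forall fun ξ => by simp [norm_symbol, Circle.norm_coe]
  · have := hsymbol.comp (Continuous.prodMk_left ξ)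
    fun_prop

end IsTestFunctionOffZero

end Propagator

section RieszPotential

variable {V : Type*} [NormedAddCommGroup V] {E : Type*} [NormedAddCommGroup E]
  {h : V → E} {M : ℝ} {k : ℕ}

lemma norm_inv_norm_pow_smul_le [NormedSpace ℝ E] (hM : ∀ y, ‖h y‖ ≤ M) (x y : V) :
    ‖(‖x - y‖ ^ k)⁻¹ • h y‖ ≤
      M * (Metric.ball 0 1).indicator (fun z : V => (‖z‖ ^ k)⁻¹) (x - y) + ‖h y‖ := by
  rw [norm_smul, norm_inv, norm_pow, norm_norm]
  by_cases hxy : x - y ∈ Metric.ball 0 1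
  · rw [indicator_of_mem hxy, mul_comm]
    exact le_add_of_le_of_nonneg (by gcongr; exact hM y) (norm_nonneg _)
  · rw [indicator_of_notMem hxy, mul_zero, zero_add]
    refine mul_le_of_le_one_left (norm_nonneg _) (inv_le_one_of_one_le₀ (one_le_pow₀ ?_))
    simpa using hxy

variable [InnerProductSpace ℝ V] [MeasurableSpace V] [BorelSpace V] [FiniteDimensional ℝ V]

lemma integrableOn_ball_inv_norm_pow (hk : k < Module.finrank ℝ V) :
    IntegrableOn (fun z : V => (‖z‖ ^ k)⁻¹) (Metric.ball 0 1) := by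
  refine integrableOn_ball_of_norm_le_rpow (C := 1) (α := k) (by lia) (by exact_mod_cast hk)
    (Eventually.of_forall fun z => ?_) (by fun_prop)
  simp [rpow_neg]

lemma integrable_mul_indicator_add_norm (hh : Integrable h) (hk : k < Module.finrank ℝ V) (x : V) :
    Integrable fun y =>
      M * (Metric.ball 0 1).indicator (fun z : V => (‖z‖ ^ k)⁻¹) (x - y) + ‖h y‖ :=
  (((integrableOn_ball_inv_norm_pow hk).integrable_indicator measurableSet_ball).comp_sub_left
    x |>.const_mul M).add hh.norm

variable [NormedSpace ℝ E]

lemma integrable_inv_norm_pow_smul (hh : Integrable h) (hM : ∀ y, ‖h y‖ ≤ M)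
    (hk : k < Module.finrank ℝ V) (x : V) : Integrable fun y => (‖x - y‖ ^ k)⁻¹ • h y := by
  refine (integrable_mul_indicator_add_norm hh hk x).mono' (.smul ?_ hh.aestronglyMeasurable)
    (Eventually.of_forall (norm_inv_norm_pow_smul_le hM x))
  exact (Measurable.inv (by fun_prop)).aestronglyMeasurable

lemma integral_norm_inv_norm_pow_smul_le (hh : Integrable h) (hM : ∀ y, ‖h y‖ ≤ M)
    (hk : k < Module.finrank ℝ V) (x : V) :
    ∫ y, ‖(‖x - y‖ ^ k)⁻¹ • h y‖ ≤
      M * (∫ z in Metric.ball (0 : V) 1, (‖z‖ ^ k)⁻¹) + ∫ y, ‖h y‖ := by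
  have hball := (integrableOn_ball_inv_norm_pow hk).integrable_indicator measurableSet_ball
  refine (integral_mono (integrable_inv_norm_pow_smul hh hM hk x).norm
    (integrable_mul_indicator_add_norm hh hk x) (norm_inv_norm_pow_smul_le hM x)).trans_eq ?_
  rw [integral_add ((hball.comp_sub_left x).const_mul M) hh.norm, integral_const_mul,
    integral_sub_left_eq_self _ volume x, integral_indicator measurableSet_ball]

end RieszPotential

section KernelMixture

variable {X Y : Type*} [MeasurableSpace X] [MeasurableSpace Y] {μ : Measure X} {ν : Measure Y}
  [SFinite μ] [SFinite ν]

lemma integral_mul_integral_comm {F : Y → ℂ} {k : X → Y → ℝ} {K : Y → ℝ}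
    (hFm : AEStronglyMeasurable F ν) (hk : Measurable (Function.uncurry k))
    (hk0 : ∀ᵐ x ∂μ, ∀ y, 0 ≤ k x y) (hkI : ∀ᵐ y ∂ν, Integrable (fun x => k x y) μ)
    (hkK : ∀ᵐ y ∂ν, ∫ x, k x y ∂μ = K y) (hF : Integrable (fun y => F y * K y) ν) :
    ∫ y, F y * K y ∂ν = ∫ x, ∫ y, F y * k x y ∂ν ∂μ := by
  have hnorm : ∀ᵐ y ∂ν, ∫ x, ‖F y * k x y‖ ∂μ = ‖F y * K y‖ := by
    filter_upwards [hkK] with y hy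
    have hK0 : 0 ≤ K y := hy ▸ integral_nonneg_of_ae (hk0.mono fun x hx => hx y)
    rw [norm_mul, norm_real, Real.norm_of_nonneg hK0, ← hy, ← integral_const_mul]
    refine integral_congr_ae (hk0.mono fun x hx => ?_)
    simp only [norm_mul, norm_real, Real.norm_of_nonneg (hx y)]
  have hint : Integrable (Function.uncurry fun y x => F y * (k x y : ℂ)) (ν.prod μ) := by
    have hk' : Measurable fun q : Y × X => (k q.2 q.1 : ℂ) :=
      Complex.measurable_ofReal.comp (hk.comp measurable_swap)
    refine (integrable_prod_iff (hFm.comp_fst.mul hk'.aestronglyMeasurable)).2 ⟨?_, ?_⟩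
    · filter_upwards [hkI] with y hy using hy.ofReal.const_mul (F y)
    · exact hF.norm.congr (hnorm.mono fun y hy => hy.symm)
  rw [← integral_integral_swap hint]
  refine integral_congr_ae (hkK.mono fun y hy => ?_)
  simp only [integral_const_mul, integral_complex_ofReal, hy]

end KernelMixture

section NewtonKernel

/-- The Gaussian `l^(-1/2) exp(-π l |z|²)`, whose integral over `l > 0` is the Newtonian kernel
`1 / |z|`. -/
def gaussianKernel (l : ℝ) (z : Rd) : ℝ := l ^ (-(1 / 2) : ℝ) * rexp (-(π * ‖z‖ ^ 2) * l)

/-- The Fourier transform of `gaussianKernel l` on `ℝ³`. -/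
def gaussianMultiplier (l : ℝ) (ζ : Rd) : ℝ := l ^ (-2 : ℝ) * rexp (-(π / l) * ‖ζ‖ ^ 2)

lemma measurable_uncurry_gaussianKernel_sub :
    Measurable (Function.uncurry fun l (q : Rd × Rd) => gaussianKernel l (q.1 - q.2)) := by
  unfold gaussianKernel Function.uncurry; fun_prop

lemma measurable_uncurry_gaussianMultiplier : Measurable (Function.uncurry gaussianMultiplier) := by
  unfold gaussianMultiplier Function.uncurry; fun_prop

lemma integrableOn_gaussianKernel {z : Rd} (hz : z ≠ 0) :
    IntegrableOn (fun l => gaussianKernel l z) (Ioi 0) := by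
  have := norm_pos_iff.2 hz
  simpa [gaussianKernel] using integrableOn_rpow_mul_exp_neg_mul_rpow (p := 1) (s := -(1 / 2))
    (b := π * ‖z‖ ^ 2) (by norm_num) (by norm_num) (by positivity)

lemma integral_gaussianKernel {z : Rd} (hz : z ≠ 0) :
    ∫ l in Ioi 0, gaussianKernel l z = ‖z‖⁻¹ := by
  have := norm_pos_iff.2 hz
  have h := Real.integral_rpow_mul_exp_neg_mul_Ioi (a := 1 / 2) (r := π * ‖z‖ ^ 2)
    (by norm_num) (by positivity)
  rw [show (1 / 2 - 1 : ℝ) = -(1 / 2) by norm_num, Real.Gamma_one_half_eq, ← Real.sqrt_eq_rpow,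
    ← Real.sqrt_mul (by positivity), show 1 / (π * ‖z‖ ^ 2) * π = ‖z‖⁻¹ ^ 2 by field_simp,
    Real.sqrt_sq (by positivity)] at h
  simpa only [gaussianKernel, neg_mul] using h

lemma gaussianMultiplier_eq_comp_rpow (l : ℝ) (ζ : Rd) : gaussianMultiplier l ζ =
    (|(-1 : ℝ)| * l ^ ((-1 : ℝ) - 1)) • rexp (-(π * ‖ζ‖ ^ 2) * l ^ (-1 : ℝ)) := by
  rw [gaussianMultiplier, rpow_neg_one, smul_eq_mul, abs_neg, abs_one, one_mul,
    show (-1 - 1 : ℝ) = -2 by norm_num, show -(π / l) * ‖ζ‖ ^ 2 = -(π * ‖ζ‖ ^ 2) * l⁻¹ by ring]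

lemma integrableOn_gaussianMultiplier {ζ : Rd} (hζ : ζ ≠ 0) :
    IntegrableOn (fun l => gaussianMultiplier l ζ) (Ioi 0) := by
  have := norm_pos_iff.2 hζ
  simp only [gaussianMultiplier_eq_comp_rpow]
  exact (integrableOn_Ioi_comp_rpow_iff _ (by norm_num)).2
    (integrableOn_exp_mul_Ioi (neg_neg_of_pos (by positivity)) 0)

lemma integral_gaussianMultiplier {ζ : Rd} (hζ : ζ ≠ 0) :
    ∫ l in Ioi 0, gaussianMultiplier l ζ = (π * ‖ζ‖ ^ 2)⁻¹ := by
  have := norm_pos_iff.2 hζ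
  simp only [gaussianMultiplier_eq_comp_rpow]
  rw [integral_comp_rpow_Ioi (fun l => rexp (-(π * ‖ζ‖ ^ 2) * l)) (by norm_num),
    integral_exp_mul_Ioi (neg_neg_of_pos (by positivity))]
  simp [neg_div_neg_eq]

lemma integrable_gaussianMultiplier {l : ℝ} (hl : 0 < l) :
    Integrable fun ζ => (gaussianMultiplier l ζ : ℂ) := by
  have h := GaussianFourier.integrable_cexp_neg_mul_sq_norm_add (V := Rd) (b := (π / l : ℝ))
    (by rw [ofReal_re]; positivity) 0 0
  refine (h.const_mul (l ^ (-2 : ℝ) : ℝ)).congr (Eventually.of_forall fun ζ => ?_)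
  simp [gaussianMultiplier]

lemma fourierInv_gaussianMultiplier {l : ℝ} (hl : 0 < l) (z : Rd) :
    𝓕⁻ (fun ζ => (gaussianMultiplier l ζ : ℂ)) z = gaussianKernel l z := by
  have h := fourier_gaussian_innerProductSpace (V := Rd) (b := (π / l : ℝ))
    (by rw [ofReal_re]; positivity) (-z)
  have hpow : (π / (π / l : ℝ) : ℂ) ^ (Module.finrank ℝ Rd / 2 : ℂ) = (l ^ (3 / 2 : ℝ) : ℝ) := by
    rw [Complex.ofReal_cpow hl.le, ofReal_div, div_div_cancel₀ (by exact_mod_cast pi_ne_zero)]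
    simp
  have hexp : cexp (-π ^ 2 * ‖-z‖ ^ 2 / (π / l : ℝ)) = (rexp (-(π * ‖z‖ ^ 2) * l) : ℝ) := by
    have : (π : ℂ) ≠ 0 := by exact_mod_cast pi_ne_zero
    push_cast
    rw [norm_neg]
    congr 1
    field_simp
  calc 𝓕⁻ (fun ζ => (gaussianMultiplier l ζ : ℂ)) z
      = (l ^ (-2 : ℝ) : ℝ) * 𝓕 (fun ζ : Rd => cexp (-(π / l : ℝ) * ‖ζ‖ ^ 2)) (-z) := by
        rw [Real.fourierInv_eq_fourier_neg, Real.fourier_eq, Real.fourier_eq, ← integral_const_mul]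
        simp [gaussianMultiplier, Circle.smul_def, mul_left_comm]
    _ = gaussianKernel l z := by
        rw [h, hpow, hexp, gaussianKernel, ← ofReal_mul, ← ofReal_mul, ← mul_assoc, ← rpow_add hl]
        norm_num

lemma ae_prod_sub_ne_zero : ∀ᵐ q : Rd × Rd, q.1 - q.2 ≠ 0 := by
  have hmeas : MeasurableSet {q : Rd × Rd | q.1 - q.2 ≠ 0} :=
    (isClosed_eq continuous_sub continuous_const).isOpen_compl.measurableSet
  refine (Measure.ae_prod_iff_ae_ae hmeas).2 (Eventually.of_forall fun x => ?_)
  filter_upwards [Measure.ae_ne volume x] with y hy using sub_ne_zero.2 hy.symm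

lemma integrable_mul_inv_norm_sub {f h : Rd → ℂ} {M : ℝ} (hf : Integrable f) (hh : Integrable h)
    (hM : ∀ y, ‖h y‖ ≤ M) :
    Integrable fun q : Rd × Rd => f q.1 * h q.2 * (‖q.1 - q.2‖⁻¹ : ℝ) := by
  have hker : Measurable fun q : Rd × Rd => ((‖q.1 - q.2‖⁻¹ : ℝ) : ℂ) := by fun_prop
  have heq (x y : Rd) : f x * h y * (‖x - y‖⁻¹ : ℝ) = f x * ((‖x - y‖ ^ 1)⁻¹ • h y) := by
    rw [real_smul, pow_one]; ring
  have hmeas := (hf.aestronglyMeasurable.comp_fst (ν := volume)).mul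
    (hh.aestronglyMeasurable.comp_snd (μ := volume)) |>.mul hker.aestronglyMeasurable
  refine (integrable_prod_iff hmeas).2 ⟨Eventually.of_forall fun x => ?_, ?_⟩
  · simp only [Pi.mul_apply, heq]
    exact (integrable_inv_norm_pow_smul hh hM (by simp) x).const_mul _
  · refine (hf.norm.mul_const (M * (∫ z in Metric.ball (0 : Rd) 1, (‖z‖ ^ 1)⁻¹) + ∫ y, ‖h y‖)).mono'
      hmeas.norm.integral_prod_right' (Eventually.of_forall fun x => ?_)
    rw [Real.norm_of_nonneg (integral_nonneg fun _ => norm_nonneg _)]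
    simp only [Pi.mul_apply, heq, norm_mul, integral_const_mul]
    gcongr
    exact integral_norm_inv_norm_pow_smul_le hh hM (by simp) x

lemma integral_mul_newton {f h : Rd → ℂ} {M : ℝ} (hf : Integrable f) (hh : Integrable h)
    (hM : ∀ y, ‖h y‖ ≤ M)
    (hfh : Integrable fun ζ => 𝓕⁻ f ζ * 𝓕 h ζ * ((π * ‖ζ‖ ^ 2)⁻¹ : ℝ)) :
    ∫ x, f x * newton h x = ∫ ζ, 𝓕⁻ f ζ * 𝓕 h ζ * ((π * ‖ζ‖ ^ 2)⁻¹ : ℝ) := by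
  have hpair := integrable_mul_inv_norm_sub hf hh hM
  have hpos {β : Type} {k : ℝ → β → ℝ} (hk : ∀ l > 0, ∀ y, 0 ≤ k l y) :
      ∀ᵐ l ∂volume.restrict (Ioi (0 : ℝ)), ∀ y, 0 ≤ k l y :=
    (ae_restrict_iff' measurableSet_Ioi).2 (Eventually.of_forall hk)
  calc ∫ x, f x * newton h x = ∫ q : Rd × Rd, f q.1 * h q.2 * (‖q.1 - q.2‖⁻¹ : ℝ) := by
        rw [Measure.volume_eq_prod, integral_prod _ hpair]
        simp only [newton, mul_assoc, integral_const_mul, ofReal_inv, div_eq_mul_inv]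
    _ = ∫ l in Ioi 0, ∫ q : Rd × Rd, f q.1 * h q.2 * gaussianKernel l (q.1 - q.2) := by
        refine integral_mul_integral_comm (hf.mul_prod hh).aestronglyMeasurable
          measurable_uncurry_gaussianKernel_sub
          (hpos fun l hl q => by unfold gaussianKernel; positivity) ?_ ?_ hpair
        · exact ae_prod_sub_ne_zero.mono fun q => integrableOn_gaussianKernel
        · exact ae_prod_sub_ne_zero.mono fun q => integral_gaussianKernel
    _ = ∫ l in Ioi 0, ∫ ζ, 𝓕⁻ f ζ * 𝓕 h ζ * gaussianMultiplier l ζ := by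
        refine setIntegral_congr_fun measurableSet_Ioi fun l hl => ?_
        simpa only [fourierInv_gaussianMultiplier hl]
          using integral_prod_mul_fourierInv_sub hf hh (integrable_gaussianMultiplier hl)
    _ = ∫ ζ, 𝓕⁻ f ζ * 𝓕 h ζ * ((π * ‖ζ‖ ^ 2)⁻¹ : ℝ) := by
        refine (integral_mul_integral_comm ?_ measurable_uncurry_gaussianMultiplier
          (hpos fun l hl ζ => by unfold gaussianMultiplier; positivity) ?_ ?_ hfh).symm
        · exact ((continuous_fourierInv_of_integrable hf).mul
            (continuous_fourier_of_integrable hh)).aestronglyMeasurable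
        · exact (Measure.ae_ne volume 0).mono fun ζ => integrableOn_gaussianMultiplier
        · exact (Measure.ae_ne volume 0).mono fun ζ => integral_gaussianMultiplier

end NewtonKernel

section HartreeForm

variable {V : Type*} [NormedAddCommGroup V] [InnerProductSpace ℝ V] [MeasurableSpace V]
  [BorelSpace V] [FiniteDimensional ℝ V] {𝕜 : Type*} [RCLike 𝕜] {g : V → 𝕜}

lemma integrable_conj_mul_comp_add (hg : Continuous g) (hc : HasCompactSupport g) (ζ : V) :
    Integrable fun α => conj (g α) * g (ζ + α) :=
  ((RCLike.continuous_conj.comp hg).mul (by fun_prop)).integrable_of_hasCompactSupport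
    (hc.comp_left (map_zero _)).mul_right

lemma stronglyMeasurable_autocorrelation (hg : Continuous g) :
    StronglyMeasurable (autocorrelation g) := by
  have hcont : Continuous fun q : V × V => conj (g q.2) * g (q.1 + q.2) := by
    have := RCLike.continuous_conj (K := 𝕜); fun_prop
  exact hcont.stronglyMeasurable.integral_prod_right

lemma norm_autocorrelation_le {M : ℝ} (hi : Integrable g) (hM : ∀ x, ‖g x‖ ≤ M) (ζ : V) :
    ‖autocorrelation g ζ‖ ≤ (∫ α, ‖g α‖) * M := by
  rw [← integral_mul_const]
  refine norm_integral_le_of_norm_le (hi.norm.mul_const M) (Eventually.of_forall fun α => ?_)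
  rw [norm_mul, RCLike.norm_conj]
  gcongr
  exact hM _

lemma autocorrelation_eq_zero {c ζ : V} {r : ℝ} (hg : ∀ x, r < ‖x - c‖ → g x = 0)
    (hζ : 2 * r < ‖ζ‖) : autocorrelation g ζ = 0 := by
  refine integral_eq_zero_of_ae (Eventually.of_forall fun α => ?_)
  rcases lt_or_ge r ‖α - c‖ with hα | hα
  · simp [hg α hα]
  · have := norm_sub_le (ζ + α - c) (α - c)
    rw [sub_sub_sub_cancel_right, add_sub_cancel_right] at this
    simp [hg (ζ + α) (by linarith)]

/-- The cubic form obtained from the Hartree nonlinearity by Fourier transform: in frequency,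
convolution with `|x|⁻¹` on `ℝ³` is multiplication by `1 / (π |ζ|²)`. -/
def hartreeForm (g : V → 𝕜) (ξ : V) : 𝕜 :=
  ∫ ζ, (π * ‖ζ‖ ^ 2)⁻¹ • (g (ξ - ζ) * autocorrelation g ζ)

lemma integrable_hartreeForm (hg : Continuous g) (hc : HasCompactSupport g)
    (hV : 2 < Module.finrank ℝ V) (ξ : V) :
    Integrable fun ζ => (π * ‖ζ‖ ^ 2)⁻¹ • (g (ξ - ζ) * autocorrelation g ζ) := by
  have hi : Integrable g := hg.integrable_of_hasCompactSupport hc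
  obtain ⟨M, hM⟩ := hc.exists_bound_of_continuous hg
  have hbound := norm_autocorrelation_le hi hM
  have hprod : Integrable fun ζ => g (ξ - ζ) * autocorrelation g ζ :=
    (hi.comp_sub_left ξ).mul_bdd (stronglyMeasurable_autocorrelation hg).aestronglyMeasurable
      (Eventually.of_forall hbound)
  have hM' (ζ : V) : ‖g (ξ - ζ) * autocorrelation g ζ‖ ≤ M * ((∫ α, ‖g α‖) * M) := by
    rw [norm_mul]
    exact mul_le_mul (hM _) (hbound ζ) (norm_nonneg _) ((norm_nonneg _).trans (hM 0))
  refine ((integrable_inv_norm_pow_smul hprod hM' hV 0).smul π⁻¹).congr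
    (Eventually.of_forall fun ζ => ?_)
  simp [smul_smul, mul_comm]

lemma hartreeForm_eq_zero {c ξ : V} {r : ℝ} (hg : ∀ x, r < ‖x - c‖ → g x = 0)
    (hξ : 3 * r < ‖ξ - c‖) : hartreeForm g ξ = 0 := by
  refine integral_eq_zero_of_ae (Eventually.of_forall fun ζ => ?_)
  rcases lt_or_ge r ‖ξ - ζ - c‖ with hζ | hζ
  · simp [hg _ hζ]
  · have := norm_add_le (ξ - ζ - c) ζ
    rw [sub_right_comm, sub_add_cancel] at this
    simp [autocorrelation_eq_zero hg (ζ := ζ) (by rw [sub_right_comm] at hζ; linarith)]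

end HartreeForm

section HartreeNonlinearity

lemma stronglyMeasurable_uncurry_nonlin {X : Type*} [MeasurableSpace X] {u : X → Rd → ℂ}
    (hu : Measurable (Function.uncurry u)) :
    StronglyMeasurable (Function.uncurry fun x => nonlin (u x)) := by
  refine StronglyMeasurable.mul (StronglyMeasurable.integral_prod_right ?_) hu.stronglyMeasurable
  have hu' : Measurable fun p : (X × Rd) × Rd => u p.1.1 p.2 :=
    hu.comp (measurable_fst.fst.prodMk measurable_snd)
  exact Measurable.stronglyMeasurable
    ((Complex.measurable_ofReal.comp hu'.norm).pow_const 2 |>.div (by fun_prop))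

variable {u : Rd → ℂ} {A : ℝ}

lemma integrable_normSq (hu : Integrable u) (hA : ∀ x, ‖u x‖ ≤ A) :
    Integrable fun x => (‖u x‖ : ℂ) ^ 2 := by
  simp only [sq]
  exact hu.norm.ofReal.mul_bdd hu.norm.ofReal.aestronglyMeasurable
    (Eventually.of_forall fun x => by simpa using hA x)

lemma norm_normSq_le (hA : ∀ x, ‖u x‖ ≤ A) (x : Rd) : ‖(‖u x‖ : ℂ) ^ 2‖ ≤ A ^ 2 := by
  simpa using pow_le_pow_left₀ (norm_nonneg _) (hA x) 2

lemma norm_nonlin_le (hu : Integrable u) (hA : ∀ x, ‖u x‖ ≤ A) (x : Rd) :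
    ‖nonlin u x‖ ≤
      (A ^ 2 * (∫ z in Metric.ball (0 : Rd) 1, ‖z‖⁻¹) + A * ∫ y, ‖u y‖) * ‖u x‖ := by
  have hnewton := (norm_integral_le_integral_norm _).trans <| integral_norm_inv_norm_pow_smul_le
    (k := 1) (integrable_normSq hu hA) (norm_normSq_le hA) (by simp) x
  simp only [pow_one] at hnewton
  have hL2 : ∫ y, ‖(‖u y‖ : ℂ) ^ 2‖ ≤ A * ∫ y, ‖u y‖ := by
    rw [← integral_const_mul]
    refine integral_mono (integrable_normSq hu hA).norm (hu.norm.const_mul A) fun y => ?_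
    simpa [sq] using mul_le_mul_of_nonneg_right (hA y) (norm_nonneg _)
  have heq : newton (fun y => (‖u y‖ : ℂ) ^ 2) x = ∫ y, ‖x - y‖⁻¹ • (‖u y‖ : ℂ) ^ 2 := by
    simp only [newton, real_smul, ofReal_inv, div_eq_inv_mul]
  rw [nonlin, norm_mul, heq]
  gcongr
  exact hnewton.trans (by gcongr)

lemma integrable_nonlin (hu : Integrable u) (hum : Measurable u) (hA : ∀ x, ‖u x‖ ≤ A) :
    Integrable (nonlin u) := by
  have hmeas : StronglyMeasurable (Function.uncurry fun _ : Unit => nonlin u) :=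
    stronglyMeasurable_uncurry_nonlin (hum.comp measurable_snd)
  have hslice : StronglyMeasurable (nonlin u) := hmeas.of_uncurry_left (x := ())
  exact (hu.norm.const_mul _).mono' hslice.aestronglyMeasurable
    (Eventually.of_forall (norm_nonlin_le hu hA))

lemma integral_norm_nonlin_le (hu : Integrable u) (hum : Measurable u) (hA : ∀ x, ‖u x‖ ≤ A) :
    ∫ x, ‖nonlin u x‖ ≤
      (A ^ 2 * (∫ z in Metric.ball (0 : Rd) 1, ‖z‖⁻¹) + A * ∫ y, ‖u y‖) * ∫ x, ‖u x‖ := by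
  rw [← integral_const_mul]
  exact integral_mono (integrable_nonlin hu hum hA).norm (hu.norm.const_mul _)
    (norm_nonlin_le hu hA)

lemma fourier_nonlin_fourierInv {g : Rd → ℂ} (hg : Continuous g) (hc : HasCompactSupport g)
    (hi : Integrable (𝓕⁻ g)) (ξ : Rd) : 𝓕 (nonlin (𝓕⁻ g)) ξ = hartreeForm g ξ := by
  have hgi : Integrable g := hg.integrable_of_hasCompactSupport hc
  have hbdd := norm_fourierInv_le_integral_norm g
  set f : Rd → ℂ := fun y => 𝐞 (inner ℝ y (-ξ)) • 𝓕⁻ g y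
  have hf : Integrable f := integrable_fourierChar_smul hi (-ξ)
  have hfhat (ζ : Rd) : 𝓕⁻ f ζ = g (ξ - ζ) := by
    rw [Real.fourierInv_eq_fourier_neg, fourier_fourierChar_smul,
      fourier_fourierInv_of_integrable hg hgi hi]
    congr 1; abel
  have hsplit (ζ : Rd) : 𝓕⁻ f ζ * 𝓕 (fun y => (‖𝓕⁻ g y‖ : ℂ) ^ 2) ζ * ((π * ‖ζ‖ ^ 2)⁻¹ : ℝ) =
      (π * ‖ζ‖ ^ 2)⁻¹ • (g (ξ - ζ) * autocorrelation g ζ) := by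
    rw [hfhat, fourier_normSq_fourierInv hg hgi hi, real_smul, mul_comm]
  have hint := integrable_hartreeForm hg hc (by simp) ξ
  calc 𝓕 (nonlin (𝓕⁻ g)) ξ = ∫ x, f x * newton (fun y => (‖𝓕⁻ g y‖ : ℂ) ^ 2) x := by
        simp only [Real.fourier_eq, nonlin, f, Circle.smul_def, smul_eq_mul, inner_neg_right]
        simp only [mul_assoc, mul_comm (newton _ _)]
    _ = ∫ ζ, 𝓕⁻ f ζ * 𝓕 (fun y => (‖𝓕⁻ g y‖ : ℂ) ^ 2) ζ * ((π * ‖ζ‖ ^ 2)⁻¹ : ℝ) :=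
        integral_mul_newton hf (integrable_normSq hi hbdd) (norm_normSq_le hbdd)
          (by simpa only [hsplit] using hint)
    _ = hartreeForm g ξ := by simp only [hsplit, hartreeForm]

end HartreeNonlinearity

section Duhamel

variable {V : Type*} [NormedAddCommGroup V] [InnerProductSpace ℝ V] [FiniteDimensional ℝ V]

lemma isTestFunctionOffZero_contDiffBump {c : V} (β : ContDiffBump c) (hβ : β.rOut < ‖c‖) (a : ℝ) :
    IsTestFunctionOffZero fun ξ => ((a * β ξ : ℝ) : ℂ) where
  contDiff := Complex.ofRealCLM.contDiff.comp (contDiff_const.mul β.contDiff)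
  hasCompactSupport := β.hasCompactSupport.mul_left.comp_left (g := ((↑) : ℝ → ℂ)) ofReal_zero
  zero_notMem_tsupport h := by
    have h0 : (0 : V) ∈ tsupport β :=
      tsupport_mul_subset_right (tsupport_comp_subset (g := ((↑) : ℝ → ℂ)) ofReal_zero _ h)
    rw [β.tsupport_eq, mem_closedBall_iff_norm', sub_zero] at h0
    exact h0.not_gt hβ

variable [MeasurableSpace V] [BorelSpace V]

lemma integral_norm_convolution_mul_le {n w : V → ℂ} (hn : Integrable n) (hw : Integrable w) :
    ∫ x, ‖(n ⋆[mul ℂ ℂ] w) x‖ ≤ (∫ x, ‖n x‖) * ∫ x, ‖w x‖ := by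
  have hnorm : ∀ x, ‖(n ⋆[mul ℂ ℂ] w) x‖ ≤ ((‖n ·‖) ⋆[mul ℝ ℝ] (‖w ·‖)) x := fun x => by
    refine (norm_integral_le_integral_norm _).trans_eq ?_
    simp only [MeasureTheory.convolution, mul_apply', norm_mul]
  calc ∫ x, ‖(n ⋆[mul ℂ ℂ] w) x‖ ≤ ∫ x, ((‖n ·‖) ⋆[mul ℝ ℝ] (‖w ·‖)) x :=
        integral_mono (hn.integrable_convolution (mul ℂ ℂ) hw).norm
          (hn.norm.integrable_convolution (mul ℝ ℝ) hw.norm) hnorm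
    _ = (∫ x, ‖n x‖) * ∫ x, ‖w x‖ := integral_convolution (mul ℝ ℝ) hn.norm hw.norm

end Duhamel

section DuhamelFourier

variable {b χ : Rd → ℂ} {n : Rd → ℂ}

lemma uProp_eq_convolution (hχ : IsTestFunctionOffZero χ) (hn : Integrable n)
    (hχn : ∀ ξ, χ ξ * 𝓕 n ξ = 𝓕 n ξ) (m σ : ℝ) :
    uProp m σ n = n ⋆[mul ℂ ℂ] 𝓕⁻ (evolve m σ χ) := by
  rw [uProp_eq_fourierInv, ← fourierInv_mul_fourier (hχ.integrable_evolve m σ) hn]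
  congr 1 with ξ
  rw [evolve, evolve, mul_assoc, hχn]

lemma fourier_uProp (hχ : IsTestFunctionOffZero χ) (hn : Integrable n)
    (hχn : ∀ ξ, χ ξ * 𝓕 n ξ = 𝓕 n ξ) {m σ : ℝ} (hw : Integrable (𝓕⁻ (evolve m σ χ))) (ξ : Rd) :
    𝓕 (uProp m σ n) ξ = symbol m σ ξ * 𝓕 n ξ := by
  rw [uProp_eq_convolution hχ hn hχn, Real.fourier_mul_convolution_eq hn hw,
    fourier_fourierInv_of_integrable (continuous_evolve m σ hχ.contDiff.continuous)
      (hχ.integrable_evolve m σ) hw, evolve, mul_left_comm, mul_comm (𝓕 n ξ), hχn]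

lemma exists_integral_norm_nonlin_le (hb : IsTestFunctionOffZero b) (m T : ℝ) :
    ∃ C : ℝ, ∀ τ ∈ Icc 0 T, Integrable (nonlin (𝓕⁻ (evolve m τ b))) ∧
      ∫ x, ‖nonlin (𝓕⁻ (evolve m τ b)) x‖ ≤ C := by
  obtain ⟨C, hC⟩ := hb.exists_integral_norm_fourierInv_le m T
  set A : ℝ := ∫ ξ, ‖b ξ‖
  have hA (τ : ℝ) (x : Rd) : ‖𝓕⁻ (evolve m τ b) x‖ ≤ A := by
    simpa only [norm_evolve] using norm_fourierInv_le_integral_norm (evolve m τ b) x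
  have hmeas (τ : ℝ) : Measurable (𝓕⁻ (evolve m τ b)) :=
    (continuous_fourierInv_of_integrable (hb.integrable_evolve m τ)).measurable
  refine ⟨(A ^ 2 * (∫ z in Metric.ball (0 : Rd) 1, ‖z‖⁻¹) + A * C) * C, fun τ hτ => ?_⟩
  obtain ⟨hi, hle⟩ := hC τ hτ
  have : 0 ≤ A := integral_nonneg fun _ => norm_nonneg _
  refine ⟨integrable_nonlin hi (hmeas τ) (hA τ),
    (integral_norm_nonlin_le hi (hmeas τ) (hA τ)).trans ?_⟩
  have : 0 ≤ ∫ z in Metric.ball (0 : Rd) 1, ‖z‖⁻¹ := integral_nonneg fun _ => by positivity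
  have hC0 : 0 ≤ C := (integral_nonneg fun _ => norm_nonneg _).trans hle
  gcongr

lemma stronglyMeasurable_uncurry_convolution {X : Type*} [MeasurableSpace X] {N W : X → Rd → ℂ}
    (hN : StronglyMeasurable (Function.uncurry N)) (hW : StronglyMeasurable (Function.uncurry W)) :
    StronglyMeasurable (Function.uncurry fun x => N x ⋆[mul ℂ ℂ] W x) := by
  refine StronglyMeasurable.integral_prod_right (StronglyMeasurable.mul ?_ ?_)
  · exact hN.comp_measurable (measurable_fst.fst.prodMk measurable_snd)
  · exact hW.comp_measurable (measurable_fst.fst.prodMk (measurable_fst.snd.sub measurable_snd))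

lemma integrable_uncurry_duhamel (hb : IsTestFunctionOffZero b) (hχ : IsTestFunctionOffZero χ)
    {m t : ℝ} (hχb : ∀ τ ∈ Icc 0 t, ∀ ξ, χ ξ * 𝓕 (nonlin (𝓕⁻ (evolve m τ b))) ξ =
      𝓕 (nonlin (𝓕⁻ (evolve m τ b))) ξ) :
    Integrable (Function.uncurry fun τ => uProp m (t - τ) (nonlin (𝓕⁻ (evolve m τ b))))
      ((volume.restrict (Ioc 0 t)).prod volume) := by
  obtain ⟨C, hC⟩ := exists_integral_norm_nonlin_le hb m t
  obtain ⟨D, hD⟩ := hχ.exists_integral_norm_fourierInv_le m t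
  have hconv (τ : ℝ) (hτ : τ ∈ Icc 0 t) := uProp_eq_convolution hχ (hC τ hτ).1 (hχb τ hτ) m (t - τ)
  have hmem : ∀ᵐ τ ∂volume.restrict (Ioc 0 t), τ ∈ Icc 0 t ∧ t - τ ∈ Icc 0 t := by
    filter_upwards [ae_restrict_mem measurableSet_Ioc] with τ hτ
    exact ⟨⟨hτ.1.le, hτ.2⟩, by linarith [hτ.2], by linarith [hτ.1]⟩
  have hN := stronglyMeasurable_uncurry_nonlin (u := fun τ => 𝓕⁻ (evolve m τ b))
    (hb.continuous_uncurry_fourierInv m).measurable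
  have hW : StronglyMeasurable (Function.uncurry fun τ => 𝓕⁻ (evolve m (t - τ) χ)) :=
    ((hχ.continuous_uncurry_fourierInv m).comp
      (f := fun p : ℝ × Rd => (t - p.1, p.2)) (by fun_prop)).stronglyMeasurable
  have hint := integrable_uncurry_of_integral_norm_le (C := C * D) (ν := volume)
    (μ := volume.restrict (Ioc 0 t)) (stronglyMeasurable_uncurry_convolution hN hW) ?_ ?_
  · refine hint.congr ?_
    filter_upwards [Measure.quasiMeasurePreserving_fst.ae hmem] with p hp
    simp only [Function.uncurry, hconv p.1 hp.1]
  · filter_upwards [hmem] with τ hτ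
    exact (hC τ hτ.1).1.integrable_convolution (mul ℂ ℂ) (hD _ hτ.2).1
  · filter_upwards [hmem] with τ hτ
    refine (integral_norm_convolution_mul_le (hC τ hτ.1).1 (hD _ hτ.2).1).trans ?_
    have hC0 : 0 ≤ C := (integral_nonneg fun _ => norm_nonneg _).trans (hC τ hτ.1).2
    exact mul_le_mul (hC τ hτ.1).2 (hD _ hτ.2).2 (integral_nonneg fun _ => norm_nonneg _) hC0

lemma exists_isTestFunctionOffZero_eq_one {c : Rd} {ρ : ℝ} (hρ : 0 < ρ) (hc : ρ < ‖c‖) :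
    ∃ χ : Rd → ℂ, IsTestFunctionOffZero χ ∧ ∀ ξ, ‖ξ - c‖ ≤ ρ → χ ξ = 1 := by
  let γ : ContDiffBump c := ⟨ρ, (ρ + ‖c‖) / 2, hρ, by linarith⟩
  have hγ : γ.rOut < ‖c‖ := by change (ρ + ‖c‖) / 2 < ‖c‖; linarith
  refine ⟨_, isTestFunctionOffZero_contDiffBump γ hγ 1, fun ξ hξ => ?_⟩
  rw [γ.one_of_mem_closedBall (mem_closedBall_iff_norm.2 hξ), mul_one, ofReal_one]

-- The cutoff `χ` does not change the nonlinearity, but replaces the propagator, whose convolution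
-- kernel is singular, by convolution with an integrable function.
lemma integrableOn_and_fourier_duhamelFree {c : Rd} {r m t : ℝ} {φ : Rd → ℂ}
    (hφ : IsTestFunctionOffZero (𝓕 φ)) (hr : 0 < r) (hsupp : ∀ x, r < ‖x - c‖ → 𝓕 φ x = 0)
    (hc : 3 * r < ‖c‖) (ht : 0 ≤ t) (ξ : Rd) :
    IntegrableOn (fun τ => symbol m (t - τ) ξ * hartreeForm (evolve m τ (𝓕 φ)) ξ) (Ioc 0 t) ∧
    𝓕 (duhamelFree m φ t) ξ =
      ∫ τ in Ioc 0 t, symbol m (t - τ) ξ * hartreeForm (evolve m τ (𝓕 φ)) ξ := by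
  obtain ⟨χ, hχ, hχ1⟩ := exists_isTestFunctionOffZero_eq_one (by positivity) hc
  obtain ⟨C, hC⟩ := exists_integral_norm_nonlin_le hφ m t
  obtain ⟨D, hD⟩ := hχ.exists_integral_norm_fourierInv_le m t
  obtain ⟨E, hE⟩ := hφ.exists_integral_norm_fourierInv_le m t
  have hN (τ : ℝ) (hτ : τ ∈ Icc 0 t) (η : Rd) :
      𝓕 (nonlin (𝓕⁻ (evolve m τ (𝓕 φ)))) η = hartreeForm (evolve m τ (𝓕 φ)) η :=
    fourier_nonlin_fourierInv (continuous_evolve m τ hφ.contDiff.continuous)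
      hφ.hasCompactSupport.mul_left (hE τ hτ).1 η
  have hχN (τ : ℝ) (hτ : τ ∈ Icc 0 t) (η : Rd) : χ η * 𝓕 (nonlin (𝓕⁻ (evolve m τ (𝓕 φ)))) η =
      𝓕 (nonlin (𝓕⁻ (evolve m τ (𝓕 φ)))) η := by
    rcases le_or_gt ‖η - c‖ (3 * r) with hη | hη
    · rw [hχ1 η hη, one_mul]
    · rw [hN τ hτ, hartreeForm_eq_zero (fun x hx => ?_) hη, mul_zero]
      rw [evolve, hsupp x hx, mul_zero]
  have hslice : ∀ τ ∈ Ioc 0 t, 𝓕 (uProp m (t - τ) (nonlin (𝓕⁻ (evolve m τ (𝓕 φ))))) ξ =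
      symbol m (t - τ) ξ * hartreeForm (evolve m τ (𝓕 φ)) ξ := fun τ hτ => by
    have hτ' : τ ∈ Icc 0 t := ⟨hτ.1.le, hτ.2⟩
    rw [fourier_uProp hχ (hC τ hτ').1 (hχN τ hτ')
      (hD (t - τ) ⟨by linarith [hτ.2], by linarith [hτ.1]⟩).1, hN τ hτ']
  have hint := integrable_uncurry_duhamel hφ hχ hχN
  refine ⟨(integrable_fourier_of_uncurry hint ξ).congr ?_, ?_⟩
  · exact (ae_restrict_mem measurableSet_Ioc).mono hslice
  · have hduhamel : duhamelFree m φ t =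
        fun x => ∫ τ in Ioc 0 t, uProp m (t - τ) (nonlin (𝓕⁻ (evolve m τ (𝓕 φ)))) x :=
      funext fun x => intervalIntegral.integral_of_le ht
    rw [hduhamel, fourier_integral hint ξ, setIntegral_congr_fun measurableSet_Ioc hslice]

end DuhamelFourier

section PhaseEstimate

variable {V : Type*} [NormedAddCommGroup V] [InnerProductSpace ℝ V] {c : V}

lemma sq_add_inner_le_sqrt_mul_sqrt (m : ℝ) (c v : V) :
    m ^ 2 + inner ℝ c v ≤ √(m ^ 2 + ‖c‖ ^ 2) * √(m ^ 2 + ‖v‖ ^ 2) := by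
  rw [← Real.sqrt_mul (by positivity)]
  refine Real.le_sqrt_of_sq_le ?_
  have hcs := abs_real_inner_le_norm c v
  have hsq : inner ℝ c v ^ 2 ≤ (‖c‖ * ‖v‖) ^ 2 := sq_le_sq' (abs_le.1 hcs).1 (abs_le.1 hcs).2
  nlinarith [sq_nonneg (m * (‖c‖ - ‖v‖)),
    mul_le_mul_of_nonneg_left (abs_le.1 hcs).2 (sq_nonneg m)]

lemma tangent_le_sqrt (m : ℝ) (hc : c ≠ 0) (v : V) :
    √(m ^ 2 + ‖c‖ ^ 2) + inner ℝ c (v - c) / √(m ^ 2 + ‖c‖ ^ 2) ≤ √(m ^ 2 + ‖v‖ ^ 2) := by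
  have hQ : 0 < √(m ^ 2 + ‖c‖ ^ 2) := by have := norm_pos_iff.2 hc; positivity
  rw [← mul_le_mul_iff_right₀ hQ, mul_add, mul_div_cancel₀ _ hQ.ne',
    Real.mul_self_sqrt (by positivity), inner_sub_right, real_inner_self_eq_norm_sq]
  linarith [sq_add_inner_le_sqrt_mul_sqrt m c v]

lemma sqrt_le_tangent_add (m : ℝ) (hc : c ≠ 0) (v : V) :
    √(m ^ 2 + ‖v‖ ^ 2) ≤ √(m ^ 2 + ‖c‖ ^ 2) + inner ℝ c (v - c) / √(m ^ 2 + ‖c‖ ^ 2) +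
      ‖v - c‖ ^ 2 / (2 * ‖c‖) := by
  have : 0 < ‖c‖ := norm_pos_iff.2 hc
  have hQ : 0 < √(m ^ 2 + ‖c‖ ^ 2) := by positivity
  have hle : ‖c‖ ≤ √(m ^ 2 + ‖c‖ ^ 2) := Real.le_sqrt_of_sq_le (by nlinarith [sq_nonneg m])
  suffices h : √(m ^ 2 + ‖v‖ ^ 2) ≤ √(m ^ 2 + ‖c‖ ^ 2) +
      inner ℝ c (v - c) / √(m ^ 2 + ‖c‖ ^ 2) + ‖v - c‖ ^ 2 / (2 * √(m ^ 2 + ‖c‖ ^ 2)) from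
    h.trans (by gcongr)
  have hc2 := Real.sq_sqrt (show 0 ≤ m ^ 2 + ‖c‖ ^ 2 by positivity)
  have hv2 := Real.sq_sqrt (show 0 ≤ m ^ 2 + ‖v‖ ^ 2 by positivity)
  have hexpand := norm_sub_sq_real v c
  rw [real_inner_comm] at hexpand
  rw [inner_sub_right, real_inner_self_eq_norm_sq]
  set Q := √(m ^ 2 + ‖c‖ ^ 2)
  set A := √(m ^ 2 + ‖v‖ ^ 2)
  have hright : Q + (inner ℝ c v - ‖c‖ ^ 2) / Q + ‖v - c‖ ^ 2 / (2 * Q) =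
      (2 * Q ^ 2 + 2 * (inner ℝ c v - ‖c‖ ^ 2) + ‖v - c‖ ^ 2) / (2 * Q) := by
    field_simp
  rw [hright, le_div_iff₀ (by positivity)]
  nlinarith [sq_nonneg (A - Q)]

-- The tangent at `c` contributes equally to both sides of `v₁ + v₂ = v₃ + v₄`, so only the
-- curvature of `phase m`, of size `1 / ‖c‖`, remains.
lemma abs_phase_add_sub_le (m : ℝ) (hc : c ≠ 0) {r : ℝ} {v₁ v₂ v₃ v₄ : V}
    (hv : v₁ + v₂ = v₃ + v₄) (h₁ : ‖v₁ - c‖ ≤ r) (h₂ : ‖v₂ - c‖ ≤ r) (h₃ : ‖v₃ - c‖ ≤ r)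
    (h₄ : ‖v₄ - c‖ ≤ r) :
    |phase m v₁ + phase m v₂ - phase m v₃ - phase m v₄| ≤ r ^ 2 / ‖c‖ := by
  have : 0 < ‖c‖ := norm_pos_iff.2 hc
  set Q := √(m ^ 2 + ‖c‖ ^ 2)
  have hlin : inner ℝ c (v₁ - c) / Q + inner ℝ c (v₂ - c) / Q =
      inner ℝ c (v₃ - c) / Q + inner ℝ c (v₄ - c) / Q := by
    rw [← add_div, ← add_div, ← inner_add_right, ← inner_add_right, sub_add_sub_comm, hv,
      sub_add_sub_comm]
  have hbounds (v : V) (h : ‖v - c‖ ≤ r) : 0 ≤ √(m ^ 2 + ‖v‖ ^ 2) - (Q + inner ℝ c (v - c) / Q) ∧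
      √(m ^ 2 + ‖v‖ ^ 2) - (Q + inner ℝ c (v - c) / Q) ≤ r ^ 2 / ‖c‖ / 2 := by
    have hquad : ‖v - c‖ ^ 2 / (2 * ‖c‖) ≤ r ^ 2 / ‖c‖ / 2 := by
      rw [div_div, mul_comm 2]; gcongr
    exact ⟨by linarith [tangent_le_sqrt m hc v], by linarith [sqrt_le_tangent_add m hc v]⟩
  have b₁ := hbounds v₁ h₁
  have b₂ := hbounds v₂ h₂
  have b₃ := hbounds v₃ h₃
  have b₄ := hbounds v₄ h₄
  simp only [phase]
  rw [abs_le]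
  constructor <;> linarith [b₁.1, b₁.2, b₂.1, b₂.2, b₃.1, b₃.2, b₄.1, b₄.2]

lemma half_le_re_symbol_mul (m : ℝ) (hc : c ≠ 0) {r τ : ℝ} {ξ ζ α : V} (hτ : 0 ≤ τ)
    (hτr : τ * r ^ 2 ≤ ‖c‖) (hξ : ‖ξ - c‖ ≤ r) (hξζ : ‖ξ - ζ - c‖ ≤ r) (hα : ‖α - c‖ ≤ r)
    (hζα : ‖ζ + α - c‖ ≤ r) :
    1 / 2 ≤ (symbol m (-τ) ξ *
      (symbol m τ (ξ - ζ) * (conj (symbol m τ α) * symbol m τ (ζ + α)))).re := by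
  set p := phase m (ξ - ζ) + phase m (ζ + α) - phase m ξ - phase m α
  have hprod : symbol m (-τ) ξ * (symbol m τ (ξ - ζ) * (conj (symbol m τ α) *
      symbol m τ (ζ + α))) = cexp ((τ * p : ℝ) * I) := by
    simp only [symbol_eq_exp_mul_I, ← Complex.exp_conj, ← Complex.exp_add, map_mul, conj_ofReal,
      conj_I]
    congr 1
    push_cast [p]
    ring
  have hp : |τ * p| ≤ 1 := by
    rw [abs_mul, abs_of_nonneg hτ]
    calc τ * |p| ≤ τ * (r ^ 2 / ‖c‖) := by
          gcongr
          exact abs_phase_add_sub_le m hc (by abel) hξζ hζα hξ hα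
      _ ≤ 1 := by rw [← mul_div_assoc]; exact div_le_one_of_le₀ hτr (norm_nonneg c)
  rw [hprod, exp_ofReal_mul_I_re]
  nlinarith [Real.one_sub_sq_div_two_le_cos (x := τ * p), abs_le.1 hp]

end PhaseEstimate

section Nonresonance

variable {V : Type*} [NormedAddCommGroup V] [InnerProductSpace ℝ V] {c : V} {b : V → ℝ} {r τ : ℝ}
  {ξ : V}

lemma half_mul_le_re_evolve (m : ℝ) (hc : c ≠ 0) (hb0 : ∀ x, 0 ≤ b x)
    (hb : ∀ x, r < ‖x - c‖ → b x = 0) (hτ : 0 ≤ τ) (hτr : τ * r ^ 2 ≤ ‖c‖) (hξ : ‖ξ - c‖ ≤ r)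
    (ζ α : V) :
    1 / 2 * (b (ξ - ζ) * (b α * b (ζ + α))) ≤ (symbol m (-τ) ξ * (evolve m τ (b ·) (ξ - ζ) *
      (conj (evolve m τ (b ·) α) * evolve m τ (b ·) (ζ + α)))).re := by
  have hfactor : symbol m (-τ) ξ * (evolve m τ (b ·) (ξ - ζ) *
      (conj (evolve m τ (b ·) α) * evolve m τ (b ·) (ζ + α))) =
      symbol m (-τ) ξ * (symbol m τ (ξ - ζ) * (conj (symbol m τ α) * symbol m τ (ζ + α))) *
        (b (ξ - ζ) * (b α * b (ζ + α)) : ℝ) := by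
    simp only [evolve, map_mul, conj_ofReal]
    push_cast
    ring
  rw [hfactor, re_mul_ofReal]
  by_cases h : ‖ξ - ζ - c‖ ≤ r ∧ ‖α - c‖ ≤ r ∧ ‖ζ + α - c‖ ≤ r
  · have := mul_nonneg (hb0 (ξ - ζ)) (mul_nonneg (hb0 α) (hb0 (ζ + α)))
    gcongr
    exact half_le_re_symbol_mul m hc hτ hτr hξ h.1 h.2.1 h.2.2
  · have hzero : b (ξ - ζ) * (b α * b (ζ + α)) = 0 := by
      simp only [not_and_or, not_le] at h
      rcases h with h | h | h <;> simp [hb _ h]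
    simp [hzero]

variable [MeasurableSpace V] [BorelSpace V] [FiniteDimensional ℝ V]

lemma half_mul_autocorrelation_le_re (m : ℝ) (hc : c ≠ 0) (hbc : Continuous b)
    (hbs : HasCompactSupport b) (hb0 : ∀ x, 0 ≤ b x) (hb : ∀ x, r < ‖x - c‖ → b x = 0)
    (hτ : 0 ≤ τ) (hτr : τ * r ^ 2 ≤ ‖c‖) (hξ : ‖ξ - c‖ ≤ r) (ζ : V) :
    1 / 2 * (b (ξ - ζ) * autocorrelation b ζ) ≤ (symbol m (-τ) ξ *
      (evolve m τ (b ·) (ξ - ζ) * autocorrelation (evolve m τ (b ·)) ζ)).re := by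
  have hevolve := integrable_conj_mul_comp_add (g := evolve m τ (b ·))
    (continuous_evolve m τ (by fun_prop)) (hbs.comp_left ofReal_zero).mul_left ζ
  have hreal := (integrable_conj_mul_comp_add hbc hbs ζ).const_mul (1 / 2 * b (ξ - ζ))
  have hle := integral_le_re_mul_integral hevolve hreal
    (θ := symbol m (-τ) ξ * evolve m τ (b ·) (ξ - ζ)) (Eventually.of_forall fun α => by
      simpa only [mul_assoc, conj_trivial] using half_mul_le_re_evolve m hc hb0 hb hτ hτr hξ ζ α)
  rwa [integral_const_mul, mul_assoc, mul_assoc] at hle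

lemma half_mul_hartreeForm_le_re (m : ℝ) (hc : c ≠ 0) (hbc : Continuous b)
    (hbs : HasCompactSupport b) (hb0 : ∀ x, 0 ≤ b x) (hb : ∀ x, r < ‖x - c‖ → b x = 0)
    (hτ : 0 ≤ τ) (hτr : τ * r ^ 2 ≤ ‖c‖) (hξ : ‖ξ - c‖ ≤ r) (hV : 2 < Module.finrank ℝ V) :
    1 / 2 * hartreeForm b ξ ≤ (symbol m (-τ) ξ * hartreeForm (evolve m τ (b ·)) ξ).re := by
  have hevolve := integrable_hartreeForm (g := evolve m τ (b ·))
    (continuous_evolve m τ (by fun_prop)) (hbs.comp_left ofReal_zero).mul_left hV ξ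
  have hreal := (integrable_hartreeForm hbc hbs hV ξ).const_mul (1 / 2)
  rw [hartreeForm, ← integral_const_mul]
  refine integral_le_re_mul_integral hevolve hreal (Eventually.of_forall fun ζ => ?_)
  rw [mul_smul_comm, mul_smul_comm, smul_re]
  exact smul_le_smul_of_nonneg_left
    (half_mul_autocorrelation_le_re m hc hbc hbs hb0 hb hτ hτr hξ ζ) (by positivity)

end Nonresonance

section HartreeFormLowerBound

variable {V : Type*} [NormedAddCommGroup V] [InnerProductSpace ℝ V] [MeasurableSpace V]
  [BorelSpace V] [FiniteDimensional ℝ V] {b : V → ℝ} {c : V} {a ρ : ℝ}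

lemma le_autocorrelation (hbc : Continuous b) (hbs : HasCompactSupport b) (hb0 : ∀ x, 0 ≤ b x)
    (ha : 0 ≤ a) (hba : ∀ x, ‖x - c‖ ≤ 2 * ρ → a ≤ b x) {ζ : V} (hζ : ‖ζ‖ ≤ ρ) :
    a ^ 2 * volume.real (Metric.ball (0 : V) ρ) ≤ autocorrelation b ζ := by
  rw [← Measure.addHaar_real_ball_center volume c ρ]
  refine mul_measureReal_le_integral (integrable_conj_mul_comp_add hbc hbs ζ)
    (fun α => mul_nonneg (hb0 α) (hb0 _)) measurableSet_ball measure_ball_lt_top.ne fun α hα => ?_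
  rw [mem_ball_iff_norm] at hα
  have hζα : ‖ζ + α - c‖ ≤ 2 * ρ := by
    rw [add_sub_assoc]
    linarith [norm_add_le ζ (α - c)]
  rw [sq]
  exact mul_le_mul (hba α (by linarith [norm_nonneg ζ])) (hba _ hζα) ha (hb0 α)

lemma le_hartreeForm (hV : 2 < Module.finrank ℝ V) (hbc : Continuous b)
    (hbs : HasCompactSupport b) (hb0 : ∀ x, 0 ≤ b x) (ha : 0 ≤ a)
    (hba : ∀ x, ‖x - c‖ ≤ 2 * ρ → a ≤ b x) {ξ : V} (hξ : ‖ξ - c‖ ≤ ρ) :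
    (π * ρ ^ 2)⁻¹ * (a ^ 3 * volume.real (Metric.ball (0 : V) ρ) ^ 2) ≤ hartreeForm b ξ := by
  have : Nontrivial V := Module.nontrivial_of_finrank_pos (R := ℝ) (by lia)
  have hnonneg (ζ : V) : 0 ≤ autocorrelation b ζ :=
    integral_nonneg fun α => mul_nonneg (hb0 α) (hb0 _)
  -- The origin is removed because the weight has the junk value `0⁻¹ = 0` there.
  set A : Set V := Metric.ball 0 ρ \ {0}
  have hA : volume.real A = volume.real (Metric.ball (0 : V) ρ) :=
    congrArg ENNReal.toReal (measure_sdiff_null (measure_singleton 0))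
  have hle := mul_measureReal_le_integral (integrable_hartreeForm hbc hbs hV ξ)
    (fun ζ => smul_nonneg (by positivity) (mul_nonneg (hb0 _) (hnonneg ζ)))
    (A := A) (measurableSet_ball.diff (measurableSet_singleton 0))
    (measure_ne_top_of_subset sdiff_subset measure_ball_lt_top.ne)
    (k := (π * ρ ^ 2)⁻¹ * (a * (a ^ 2 * volume.real (Metric.ball (0 : V) ρ)))) fun ζ hζ => ?_
  · calc _ = _ := by rw [hA]; ring
      _ ≤ hartreeForm b ξ := hle
  · have hζρ : ‖ζ‖ ≤ ρ := (mem_ball_zero_iff.1 hζ.1).le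
    have hζ0 : 0 < ‖ζ‖ := norm_pos_iff.2 hζ.2
    have hξζ : ‖ξ - ζ - c‖ ≤ 2 * ρ := by
      rw [sub_right_comm]
      linarith [norm_sub_le (ξ - c) ζ]
    have hb := hba _ hξζ
    have hauto := le_autocorrelation hbc hbs hb0 ha hba hζρ
    have := hb0 (ξ - ζ)
    rw [smul_eq_mul]
    gcongr

end HartreeFormLowerBound

section DuhamelLowerBound

variable {b : Rd → ℝ} {c : Rd} {m r t : ℝ} {φ : Rd → ℂ}

lemma half_mul_hartreeForm_le_norm_fourier_duhamelFree
    (hb : IsTestFunctionOffZero fun ξ => (b ξ : ℂ)) (hφ : 𝓕 φ = fun ξ => (b ξ : ℂ))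
    (hb0 : ∀ x, 0 ≤ b x) (hsupp : ∀ x, r < ‖x - c‖ → b x = 0)
    (hr : 0 < r) (hc : 3 * r < ‖c‖) (ht : 0 ≤ t) (htr : t * r ^ 2 ≤ ‖c‖) {ξ : Rd}
    (hξ : ‖ξ - c‖ ≤ r) : t / 2 * hartreeForm b ξ ≤ ‖𝓕 (duhamelFree m φ t) ξ‖ := by
  have hc0 : c ≠ 0 := norm_pos_iff.1 (by linarith)
  have hbc : Continuous b := Complex.continuous_re.comp hb.contDiff.continuous
  have hbs : HasCompactSupport b := hb.hasCompactSupport.comp_left Complex.zero_re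
  obtain ⟨hint, hduhamel⟩ := integrableOn_and_fourier_duhamelFree (m := m) (hφ ▸ hb) hr
    (fun x hx => by simp [hφ, hsupp x hx]) hc ht ξ
  rw [hφ] at hint hduhamel
  have hslice : ∀ᵐ τ ∂volume.restrict (Ioc 0 t), 1 / 2 * hartreeForm b ξ ≤
      (symbol m (-t) ξ * (symbol m (t - τ) ξ * hartreeForm (evolve m τ (b ·)) ξ)).re := by
    filter_upwards [ae_restrict_mem measurableSet_Ioc] with τ hτ
    have hτr : τ * r ^ 2 ≤ ‖c‖ := le_trans (by gcongr; exact hτ.2) htr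
    have hsymbol : symbol m (-t) ξ * symbol m (t - τ) ξ = symbol m (-τ) ξ := by
      rw [← symbol_add]; congr 1; ring
    rw [← mul_assoc, hsymbol]
    exact half_mul_hartreeForm_le_re m hc0 hbc hbs hb0 hsupp hτ.1.le hτr hξ (by simp)
  calc t / 2 * hartreeForm b ξ = ∫ τ in Ioc 0 t, 1 / 2 * hartreeForm b ξ := by
        rw [setIntegral_const, Real.volume_real_Ioc_of_le ht, smul_eq_mul]
        ring
    _ ≤ (symbol m (-t) ξ * 𝓕 (duhamelFree m φ t) ξ).re := by
        rw [hduhamel]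
        exact integral_le_re_mul_integral hint (integrable_const _) hslice
    _ ≤ ‖𝓕 (duhamelFree m φ t) ξ‖ := by
        simpa only [norm_mul, norm_symbol, one_mul] using
          Complex.re_le_norm (symbol m (-t) ξ * 𝓕 (duhamelFree m φ t) ξ)

end DuhamelLowerBound

section AddHaar

variable {E : Type*} [NormedAddCommGroup E] [NormedSpace ℝ E] [FiniteDimensional ℝ E]
  [MeasurableSpace E] (μ : Measure E) [μ.IsAddHaarMeasure]

lemma addHaar_real_ball [BorelSpace E] [Nontrivial E] (x : E) {ρ : ℝ} (hρ : 0 ≤ ρ) :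
    μ.real (Metric.ball x ρ) = ρ ^ Module.finrank ℝ E * μ.real (Metric.ball (0 : E) 1) := by
  rw [measureReal_def, Measure.addHaar_ball μ x hρ, ENNReal.toReal_mul,
    ENNReal.toReal_ofReal (by positivity), measureReal_def]

lemma addHaar_real_ball_pos (x : E) {ρ : ℝ} (hρ : 0 < ρ) : 0 < μ.real (Metric.ball x ρ) :=
  ENNReal.toReal_pos (Metric.measure_ball_pos μ x hρ).ne' measure_ball_lt_top.ne

end AddHaar

section SobolevNorm

lemma rpow_le_rpow_abs_mul_rpow {x y K s : ℝ} (hx : 0 < x) (hy : 0 < y) (hyx : y ≤ K * x)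
    (hxy : x ≤ K * y) : y ^ s ≤ K ^ |s| * x ^ s := by
  have hK : 0 < K := pos_of_mul_pos_left (hy.trans_le hyx) hx.le
  rcases le_total 0 s with hs | hs
  · rw [abs_of_nonneg hs, ← Real.mul_rpow hK.le hx.le]
    exact Real.rpow_le_rpow hy.le hyx hs
  · rw [abs_of_nonpos hs, Real.rpow_neg hK.le, ← Real.inv_rpow hK.le,
      ← Real.mul_rpow (inv_nonneg.2 hK.le) hx.le]
    exact Real.rpow_le_rpow_of_nonpos (by positivity) ((inv_mul_le_iff₀ hK).2 hxy) hs

variable {V : Type*} [NormedAddCommGroup V] {c ξ : V}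

lemma one_add_norm_sq_le (hξ : ‖ξ - c‖ ≤ ‖c‖ / 2) :
    1 + ‖ξ‖ ^ 2 ≤ 4 * (1 + ‖c‖ ^ 2) ∧ 1 + ‖c‖ ^ 2 ≤ 4 * (1 + ‖ξ‖ ^ 2) := by
  have hle : ‖ξ‖ ≤ 2 * ‖c‖ := by linarith [norm_le_norm_add_norm_sub' ξ c, norm_nonneg c]
  have hge : ‖c‖ ≤ 2 * ‖ξ‖ := by linarith [norm_le_norm_add_norm_sub ξ c]
  constructor <;> nlinarith [norm_nonneg c, norm_nonneg ξ]

lemma four_rpow_eq_two_rpow_sq (x : ℝ) : (4 : ℝ) ^ x = (2 ^ x) ^ 2 := by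
  rw [← Real.rpow_natCast, ← Real.rpow_mul two_pos.le, mul_comm, Real.rpow_mul two_pos.le]
  norm_num

lemma one_add_norm_sq_rpow_le (s : ℝ) (hξ : ‖ξ - c‖ ≤ ‖c‖ / 2) :
    (1 + ‖ξ‖ ^ 2) ^ s ≤ (2 ^ |s|) ^ 2 * (1 + ‖c‖ ^ 2) ^ s ∧
    (1 + ‖c‖ ^ 2) ^ s ≤ (2 ^ |s|) ^ 2 * (1 + ‖ξ‖ ^ 2) ^ s := by
  obtain ⟨hle, hge⟩ := one_add_norm_sq_le hξ
  rw [← four_rpow_eq_two_rpow_sq]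
  exact ⟨rpow_le_rpow_abs_mul_rpow (by positivity) (by positivity) hle hge,
    rpow_le_rpow_abs_mul_rpow (by positivity) (by positivity) hge hle⟩

lemma setLIntegral_ofReal_mul_sq_rpow_half {X : Type*} [MeasurableSpace X] {μ : Measure X}
    {A : Set X} (hA : μ A ≠ ⊤) {k w : ℝ} (hk : 0 ≤ k) (hw : 0 ≤ w) :
    (∫⁻ _ in A, ENNReal.ofReal (k ^ 2 * w) ∂μ) ^ (1 / 2 : ℝ) =
      ENNReal.ofReal (k * √(w * μ.real A)) := by
  rw [setLIntegral_const, ← ENNReal.ofReal_toReal hA, ← measureReal_def,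
    ← ENNReal.ofReal_mul (by positivity), ENNReal.ofReal_rpow_of_nonneg (by positivity)
    (by positivity), ← Real.sqrt_eq_rpow, mul_assoc, Real.sqrt_mul (by positivity),
    Real.sqrt_sq hk]

/-- The `H^s` size of the indicator function of the ball of radius `ρ` around the frequency `c`,
with the Sobolev weight frozen at `c`. -/
def sobolevBallNorm (s : ℝ) (c : Rd) (ρ : ℝ) : ℝ :=
  √((1 + ‖c‖ ^ 2) ^ s * volume.real (Metric.ball c ρ))

variable {c : Rd} {ρ M : ℝ} {f : Rd → ℂ}

lemma sobolevBallNorm_pos (s : ℝ) (c : Rd) (hρ : 0 < ρ) : 0 < sobolevBallNorm s c ρ :=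
  Real.sqrt_pos.2 (mul_pos (by positivity) (addHaar_real_ball_pos volume c hρ))

lemma sobolevBallNorm_sq (s : ℝ) (c : Rd) (hρ : 0 ≤ ρ) : sobolevBallNorm s c ρ ^ 2 =
    (1 + ‖c‖ ^ 2) ^ s * (ρ ^ 3 * volume.real (Metric.ball (0 : Rd) 1)) := by
  rw [sobolevBallNorm, Real.sq_sqrt (by positivity), addHaar_real_ball volume c hρ,
    finrank_euclideanSpace_fin]

lemma sobolevBallNorm_div_four (s : ℝ) (c : Rd) (hρ : 0 ≤ ρ) :
    sobolevBallNorm s c (ρ / 4) = sobolevBallNorm s c ρ / 8 := by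
  have hnonneg (ρ : ℝ) : 0 ≤ sobolevBallNorm s c ρ := Real.sqrt_nonneg _
  refine (sq_eq_sq₀ (hnonneg _) (div_nonneg (hnonneg _) (by norm_num))).1 ?_
  rw [div_pow, sobolevBallNorm_sq s c (by positivity), sobolevBallNorm_sq s c hρ]
  ring

lemma HsNorm_le_of_fourier_le (s : ℝ) (hρ : ρ ≤ ‖c‖ / 2) (hM : 0 ≤ M) (hf : ∀ ξ, ‖𝓕 f ξ‖ ≤ M)
    (hf0 : ∀ ξ, ρ ≤ ‖ξ - c‖ → 𝓕 f ξ = 0) :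
    HsNorm s f ≤ ENNReal.ofReal (2 ^ |s| * M * sobolevBallNorm s c ρ) := by
  rw [sobolevBallNorm, ← setLIntegral_ofReal_mul_sq_rpow_half measure_ball_lt_top.ne (by positivity)
    (by positivity), ← lintegral_indicator measurableSet_ball, HsNorm]
  gcongr with ξ
  by_cases hξ : ξ ∈ Metric.ball c ρ
  · rw [indicator_of_mem hξ]
    have hweight := (one_add_norm_sq_rpow_le s ((mem_ball_iff_norm.1 hξ).le.trans hρ)).1
    refine ENNReal.ofReal_le_ofReal ?_
    calc (1 + ‖ξ‖ ^ 2) ^ s * ‖𝓕 f ξ‖ ^ 2 ≤ (2 ^ |s|) ^ 2 * (1 + ‖c‖ ^ 2) ^ s * M ^ 2 := by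
          gcongr
          exact hf ξ
      _ = (2 ^ |s| * M) ^ 2 * (1 + ‖c‖ ^ 2) ^ s := by ring
  · rw [hf0 ξ (not_lt.1 fun h => hξ (mem_ball_iff_norm.2 h))]
    simp

lemma le_HsNorm_of_le_fourier (s : ℝ) (hρ : ρ ≤ ‖c‖ / 2) (hM : 0 ≤ M)
    (hf : ∀ ξ, ‖ξ - c‖ ≤ ρ → M ≤ ‖𝓕 f ξ‖) :
    ENNReal.ofReal ((2 ^ |s|)⁻¹ * M * sobolevBallNorm s c ρ) ≤ HsNorm s f := by
  rw [sobolevBallNorm, ← setLIntegral_ofReal_mul_sq_rpow_half measure_ball_lt_top.ne (by positivity)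
    (by positivity), HsNorm]
  refine ENNReal.rpow_le_rpow (le_trans ?_ (setLIntegral_le_lintegral (Metric.ball c ρ) _))
    (by norm_num)
  refine setLIntegral_mono' measurableSet_ball fun ξ hξ => ENNReal.ofReal_le_ofReal ?_
  have hξρ : ‖ξ - c‖ ≤ ρ := (mem_ball_iff_norm.1 hξ).le
  have hweight := (one_add_norm_sq_rpow_le s (hξρ.trans hρ)).2
  calc ((2 ^ |s|)⁻¹ * M) ^ 2 * (1 + ‖c‖ ^ 2) ^ s =
        ((2 ^ |s|) ^ 2)⁻¹ * (1 + ‖c‖ ^ 2) ^ s * M ^ 2 := by ring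
    _ ≤ (1 + ‖ξ‖ ^ 2) ^ s * ‖𝓕 f ξ‖ ^ 2 := by
        gcongr
        · exact (inv_mul_le_iff₀ (by positivity)).2 hweight
        · exact hf ξ hξρ

end SobolevNorm

section Bump

variable {c : Rd} (β : ContDiffBump c)

lemma exists_fourier_eq_contDiffBump (hβ : β.rOut < ‖c‖) (a : ℝ) :
    ∃ φ : Rd → ℂ, 𝓕 φ = fun ξ => ((a * β ξ : ℝ) : ℂ) := by
  have hb := isTestFunctionOffZero_contDiffBump β hβ a
  obtain ⟨C, hC⟩ := hb.exists_integral_norm_fourierInv_le 0 0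
  have hb0 : evolve 0 0 (fun ξ => ((a * β ξ : ℝ) : ℂ)) = fun ξ => ((a * β ξ : ℝ) : ℂ) := by
    ext ξ; simp [evolve, symbol]
  have hint := hb0 ▸ (hC 0 (by simp)).1
  exact ⟨_, fourier_fourierInv_of_integrable hb.contDiff.continuous
    (hb.contDiff.continuous.integrable_of_hasCompactSupport hb.hasCompactSupport) hint⟩

variable {β} {φ : Rd → ℂ} {a : ℝ}

lemma HsNorm_le_of_fourier_eq_contDiffBump (hφ : 𝓕 φ = fun ξ => ((a * β ξ : ℝ) : ℂ)) (ha : 0 ≤ a)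
    (hβ : β.rOut ≤ ‖c‖ / 2) (s : ℝ) :
    HsNorm s φ ≤ ENNReal.ofReal (2 ^ |s| * a * sobolevBallNorm s c β.rOut) := by
  refine HsNorm_le_of_fourier_le s hβ ha (fun ξ => ?_) fun ξ hξ => ?_
  · rw [hφ, norm_real, Real.norm_of_nonneg (mul_nonneg ha β.nonneg)]
    exact mul_le_of_le_one_right ha β.le_one
  · simp only [hφ, β.zero_of_le_dist (by rwa [dist_eq_norm]), mul_zero, ofReal_zero]

lemma HsNorm_pos_of_fourier_eq_contDiffBump (hφ : 𝓕 φ = fun ξ => ((a * β ξ : ℝ) : ℂ)) (ha : 0 < a)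
    (hβ : β.rOut ≤ ‖c‖ / 2) (s : ℝ) : 0 < HsNorm s φ := by
  have hle : ENNReal.ofReal ((2 ^ |s|)⁻¹ * a * sobolevBallNorm s c β.rIn) ≤ HsNorm s φ := by
    refine le_HsNorm_of_le_fourier s (β.rIn_lt_rOut.le.trans hβ) ha.le fun ξ hξ => ?_
    simp only [hφ, β.one_of_mem_closedBall (mem_closedBall_iff_norm.2 hξ), mul_one, norm_real]
    exact le_abs_self a
  have hN := sobolevBallNorm_pos s c β.rIn_pos
  exact (ENNReal.ofReal_pos.2 (by positivity)).trans_le hle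

lemma le_HsNorm_duhamelFree_of_fourier_eq_contDiffBump
    (hφ : 𝓕 φ = fun ξ => ((a * β ξ : ℝ) : ℂ)) (ha : 0 ≤ a) (hc : 3 * β.rOut < ‖c‖) (m s : ℝ)
    {t : ℝ} (ht : 0 ≤ t) (htr : t * β.rOut ^ 2 ≤ ‖c‖) :
    ENNReal.ofReal ((2 ^ |s|)⁻¹ * (t / 2 * ((π * (β.rIn / 2) ^ 2)⁻¹ *
        (a ^ 3 * volume.real (Metric.ball (0 : Rd) (β.rIn / 2)) ^ 2))) *
      sobolevBallNorm s c (β.rIn / 2)) ≤ HsNorm s (duhamelFree m φ t) := by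
  have hin := β.rIn_pos
  have hinout := β.rIn_lt_rOut
  have hb := isTestFunctionOffZero_contDiffBump β (by linarith) a
  have hb0 (ξ : Rd) : 0 ≤ a * β ξ := mul_nonneg ha β.nonneg
  have hba (ξ : Rd) (hξ : ‖ξ - c‖ ≤ 2 * (β.rIn / 2)) : a ≤ a * β ξ := by
    rw [β.one_of_mem_closedBall (mem_closedBall_iff_norm.2 (by linarith)), mul_one]
  have hsupp (ξ : Rd) (hξ : β.rOut < ‖ξ - c‖) : a * β ξ = 0 := by
    rw [β.zero_of_le_dist (by rw [dist_eq_norm]; exact hξ.le), mul_zero]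
  refine le_HsNorm_of_le_fourier s (by linarith) (by positivity) fun ξ hξ => ?_
  refine le_trans ?_ (half_mul_hartreeForm_le_norm_fourier_duhamelFree hb hφ hb0 hsupp β.rOut_pos
    hc ht htr (by linarith))
  gcongr
  exact le_hartreeForm (by simp) (continuous_const.mul β.continuous) β.hasCompactSupport.mul_left
    hb0 ha hba hξ

end Bump

section Failure

lemma exists_mul_one_add_sq_rpow_lt {s : ℝ} (hs : s < 1 / 4) {D : ℝ} (hD : 0 ≤ D) (L : ℝ) :
    ∃ r : ℝ, 1 ≤ r ∧ D * (1 + (L * r ^ 2) ^ 2) ^ s < r := by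
  set σ := max s 0
  have hσ : 0 < 1 - 4 * σ := by linarith [max_lt hs (by norm_num : (0 : ℝ) < 1 / 4)]
  obtain ⟨r, hr1, hr⟩ := ((eventually_ge_atTop 1).and ((tendsto_rpow_atTop hσ).eventually_gt_atTop
    (D * (1 + L ^ 2) ^ σ))).exists
  have hr0 : 0 < r := by linarith
  refine ⟨r, hr1, ?_⟩
  calc D * (1 + (L * r ^ 2) ^ 2) ^ s ≤ D * (1 + (L * r ^ 2) ^ 2) ^ σ := by
        gcongr
        · exact le_add_of_nonneg_right (sq_nonneg _)
        · exact le_max_left s 0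
    _ ≤ D * ((1 + L ^ 2) * r ^ 4) ^ σ := by
        gcongr
        nlinarith [one_le_pow₀ (n := 4) hr1]
    _ = D * (1 + L ^ 2) ^ σ * r ^ (4 * σ) := by
        rw [Real.mul_rpow (by positivity) (by positivity), ← Real.rpow_natCast r 4,
          ← Real.rpow_mul hr0.le, mul_assoc, Nat.cast_ofNat]
    _ < r ^ (1 - 4 * σ) * r ^ (4 * σ) := by gcongr
    _ = r := by rw [← Real.rpow_add hr0, sub_add_cancel, Real.rpow_one]

lemma cubic_lt_of_mul_lt {C K κ N a r t w : ℝ} (hK : 0 < K) (hκ : 0 < κ) (hN : 0 < N) (ha : 0 < a)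
    (hr : 0 < r) (ht : 0 < t) (hNsq : N ^ 2 = w * (r ^ 3 * κ))
    (h : 4096 * π * C * K ^ 4 / (t * κ) * w < r) :
    C * (K * a * N) ^ 3 <
      K⁻¹ * (t / 2 * ((π * (r / 4) ^ 2)⁻¹ * (a ^ 3 * ((r / 4) ^ 3 * κ) ^ 2))) * (N / 8) := by
  have : 0 < a ^ 3 * N * t * κ ^ 2 * r ^ 3 / (4096 * π * K) := by positivity
  calc C * (K * a * N) ^ 3 = C * K ^ 3 * a ^ 3 * N * N ^ 2 := by ring
    _ = a ^ 3 * N * t * κ ^ 2 * r ^ 3 / (4096 * π * K) *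
          (4096 * π * C * K ^ 4 / (t * κ) * w) := by
        rw [hNsq]
        field_simp
    _ < a ^ 3 * N * t * κ ^ 2 * r ^ 3 / (4096 * π * K) * r := by gcongr
    _ = _ := by
        field_simp
        norm_num

lemma exists_HsNorm_le_and_mul_pow_lt_HsNorm_duhamelFree {C r s t : ℝ} {c : Rd} (hC : 0 ≤ C)
    (hr : 0 < r) (hc : 3 * r < ‖c‖) (ht : 0 < t) (htr : t * r ^ 2 ≤ ‖c‖)
    (h : 4096 * π * C * (2 ^ |s|) ^ 4 / (t * volume.real (Metric.ball (0 : Rd) 1)) *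
      (1 + ‖c‖ ^ 2) ^ s < r) (m : ℝ) {ε : ℝ} (hε : 0 < ε) :
    ∃ φ : Rd → ℂ, 0 < HsNorm s φ ∧ HsNorm s φ ≤ ENNReal.ofReal ε ∧
      ENNReal.ofReal C * HsNorm s φ ^ 3 < HsNorm s (duhamelFree m φ t) := by
  let β : ContDiffBump c := ⟨r / 2, r, by positivity, by linarith⟩
  set N := sobolevBallNorm s c r
  have hN : 0 < N := sobolevBallNorm_pos s c hr
  have hκ := addHaar_real_ball_pos volume (0 : Rd) one_pos
  set a : ℝ := ε / (2 ^ |s| * N) with ha_def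
  have ha : 0 < a := by positivity
  have hε' : 2 ^ |s| * a * N = ε := by rw [ha_def]; field_simp
  obtain ⟨φ, hφ⟩ := exists_fourier_eq_contDiffBump β (by linarith : r < ‖c‖) a
  have hupper : HsNorm s φ ≤ ENNReal.ofReal ε := hε' ▸
    HsNorm_le_of_fourier_eq_contDiffBump hφ ha.le (by linarith : r ≤ ‖c‖ / 2) s
  have hlower := le_HsNorm_duhamelFree_of_fourier_eq_contDiffBump hφ ha.le hc m s ht.le htr
  have hquarter : β.rIn / 2 = r / 4 := by
    change r / 2 / 2 = r / 4
    ring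
  rw [hquarter, sobolevBallNorm_div_four s c hr.le, addHaar_real_ball volume 0 (by positivity),
    finrank_euclideanSpace_fin] at hlower
  refine ⟨φ, HsNorm_pos_of_fourier_eq_contDiffBump hφ ha (by linarith : r ≤ ‖c‖ / 2) s, hupper, ?_⟩
  calc ENNReal.ofReal C * HsNorm s φ ^ 3 ≤ ENNReal.ofReal C * ENNReal.ofReal ε ^ 3 := by gcongr
    _ = ENNReal.ofReal (C * (2 ^ |s| * a * N) ^ 3) := by
        rw [hε', ENNReal.ofReal_mul hC, ENNReal.ofReal_pow hε.le]
    _ < _ := (ENNReal.ofReal_lt_ofReal_iff (by positivity)).2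
        (cubic_lt_of_mul_lt (by positivity) hκ hN ha hr ht (sobolevBallNorm_sq s c hr.le) h)
    _ ≤ HsNorm s (duhamelFree m φ t) := hlower

end Failure

theorem duhamel_estimate_fails_general (m s t : ℝ) (ht : 0 < t) (hs : s < 1 / 4) :
    ∀ C : ℝ, 0 < C → ∀ ε : ℝ, 0 < ε →
      ∃ φ : Rd → ℂ,
        0 < HsNorm s φ ∧ HsNorm s φ ≤ ENNReal.ofReal ε ∧
        ENNReal.ofReal C * HsNorm s φ ^ 3 < HsNorm s (duhamelFree m φ t) := by
  intro C hC ε hε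
  obtain ⟨r, hr1, hr⟩ := exists_mul_one_add_sq_rpow_lt hs
    (D := 4096 * π * C * (2 ^ |s|) ^ 4 / (t * volume.real (Metric.ball (0 : Rd) 1)))
    (by positivity) (4 + t)
  obtain ⟨c, hc⟩ := exists_norm_eq Rd (c := (4 + t) * r ^ 2) (by positivity)
  have hrc : 4 * r ≤ ‖c‖ ∧ t * r ^ 2 ≤ ‖c‖ := by constructor <;> rw [hc] <;> nlinarith
  rw [← hc] at hr
  exact exists_HsNorm_le_and_mul_pow_lt_HsNorm_duhamelFree hC.le (by linarith) (by linarith) ht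
    hrc.2 hr m hε

/-- failure of the cubic Duhamel estimate in `H^s(ℝ³)` for `s < 1/4`:
for `m ≥ 0`, fixed `t ∈ (0,1]` and any constants `C, ε > 0` there is `φ` with
`0 < ‖φ‖_{H^s} ≤ ε` and `‖∫₀ᵗ U(t-τ)[(|x|⁻¹ ∗ |U(τ)φ|²)U(τ)φ] dτ‖_{H^s} > C ‖φ‖_{H^s}³`. -/
theorem duhamel_estimate_fails (m s t : ℝ) (hm : 0 ≤ m) (ht : 0 < t) (ht1 : t ≤ 1)
    (hs : s < 1 / 4) :
    ∀ C : ℝ, 0 < C → ∀ ε : ℝ, 0 < ε →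
      ∃ φ : Rd → ℂ,
        0 < HsNorm s φ ∧ HsNorm s φ ≤ ENNReal.ofReal ε ∧
        ENNReal.ofReal C * HsNorm s φ ^ 3 < HsNorm s (duhamelFree m φ t) :=
  duhamel_estimate_fails_general m s t ht hs
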